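/- Let a ∈ [0,1], θ ∈ (0,1), and β ∈ [0, a/2]. Set q = 2(2+a)/(θ(β+1)) and p = 2/(1−θ). There exists a constant C > 0 such that for every Schwartz function u₀ on ℝ one has ( ∫_ℝ ‖D^{θβ/2} W(t)u₀‖_{L^p_x(ℝ)}^q dt )^{1/q} ≤ C ‖u₀‖_{L²(ℝ)}. -/

import Mathlib

/-!
Write `γ = (β+1)/(2+a)`; the hypothesis `β ≤ a/2` says `γ ≤ 1/2`. The estimate interpolates
between two endpoints, the conservation of the `L²` norm (`θ = 0`) and the maximal estimate
`L^{2/γ}_t L^∞_x` for `D^{β/2} W(t)` (`θ = 1`).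

The endpoint `θ = 1` rests on the dispersive bound `|∫ |ξ|^β e^{i(tω(ξ)-xξ)} dξ| ≤ 20 |t|^{-γ}`.
The substitution `η = ξ^{1+β}` removes the weight, scaling reduces to `t = 1`, and the remaining
integral is estimated by van der Corput's lemma, the second-derivative test applying exactly
because `γ ≤ 1/2`. A `T T*` argument along an arbitrary measurable curve `x(t)` and the
Hardy–Littlewood–Sobolev inequality bound `D^{β/2} W(t)u₀` at `x(t)` in `L^{2/γ}_t`; letting the
curve follow the maximum gives the maximal estimate.

Stein's complex interpolation is replaced by an explicit argument. With
`g v = 1 / (e^{-θv} + e^{(1-θ)v})` one has `e^{θv} = g v + e^v g v`, and `g` is the Fourier integral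
of an `L¹` function `G`. Taking `v = c + (β/2) log |ξ|` writes `e^{θc} D^{θβ/2}` as a sum of two
averages of imaginary powers of `D`, and optimising in `c` yields the pointwise bound
`|D^{θβ/2} W(t)u₀| ≤ 2 A₀^{1-θ} A₁^θ` up to normalisation, where `A₀` and `A₁` are averages of
`|W(t) D^{πiyβ} u₀|` and `|D^{β/2} W(t) D^{πiyβ} u₀|` with weight `|G y|`. Imaginary powers preserve
the `L²` norm of the data, so integrating in `x` and then in `t` gives the estimate.
-/

open MeasureTheory Complex

noncomputable section

/-- The dispersive symbol `ω(ξ) = ξ |ξ|^(1+a)`. -/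
def disp (a ξ : ℝ) : ℝ := ξ * |ξ| ^ (1 + a)

/-- Fourier transform on `ℝ`, convention `f̂(ξ) = ∫ e^{ixξ} f(x) dx`. -/
def FT1 (f : ℝ → ℂ) (ξ : ℝ) : ℂ :=
  ∫ x : ℝ, Complex.exp (Complex.I * ((x * ξ : ℝ) : ℂ)) * f x

/-- Spacetime Fourier transform, convention `f̂(ξ,λ) = ∫ e^{i(xξ+tλ)} f(x,t) dx dt`,
for `f : ℝ × ℝ → ℂ` with first coordinate `x` (space) and second `t` (time). -/
def FT2 (f : ℝ × ℝ → ℂ) (ξ lam : ℝ) : ℂ :=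
  ∫ p : ℝ × ℝ, Complex.exp (Complex.I * ((p.1 * ξ + p.2 * lam : ℝ) : ℂ)) * f p

/-- The dyadic cutoffs `χ_j`: `χ_0 = χ₀` and `χ_j(z) = χ(2^{-j} z)` for `j ≥ 1`. -/
def chiJ (χ₀ χ : ℝ → ℝ) (j : ℕ) (z : ℝ) : ℝ :=
  if j = 0 then χ₀ z else χ ((2 : ℝ) ^ (-(j : ℝ)) * z)

/-- Hypotheses on the fixed dyadic cutoffs. -/
structure DyadicCutoffs (χ₀ χ : ℝ → ℝ) : Prop where
  smooth0 : ContDiff ℝ (⊤ : ℕ∞) χ₀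
  even0 : ∀ z, χ₀ (-z) = χ₀ z
  mem0 : ∀ z, χ₀ z ∈ Set.Icc (0 : ℝ) 1
  supp0 : ∀ z, 2 < |z| → χ₀ z = 0
  one0 : ∀ z, |z| ≤ 1 → χ₀ z = 1
  smooth1 : ContDiff ℝ (⊤ : ℕ∞) χ
  even1 : ∀ z, χ (-z) = χ z
  mem1 : ∀ z, χ z ∈ Set.Icc (0 : ℝ) 1
  supp1 : ∀ z, χ z ≠ 0 → 1 / 2 < |z| ∧ |z| < 2
  partition : ∀ z, ∑' j : ℕ, chiJ χ₀ χ j z = 1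

/-- A smooth time cutoff supported in `[-1,1]`. -/
structure TimeCutoff (ψ : ℝ → ℝ) : Prop where
  smooth : ContDiff ℝ (⊤ : ℕ∞) ψ
  supp : ∀ t, ψ t ≠ 0 → |t| ≤ 1

/-- The norm `‖f‖_{X^b_s}`. -/
def Xnorm (a : ℝ) (χ₀ χ : ℝ → ℝ) (b s : ℝ) (f : ℝ × ℝ → ℂ) : ℝ :=
  ∑' j : ℕ, (2 : ℝ) ^ ((j : ℝ) * b) *
    (∫ p : ℝ × ℝ, chiJ χ₀ χ j (p.2 - disp a p.1) * (1 + |p.1|) ^ (2 * s) *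
      ‖FT2 f p.1 p.2‖ ^ 2) ^ ((1 : ℝ) / 2)

/-- The norm `‖f‖_{Y^b_{s₀,s₁}} = ‖x·f‖_{X^b_{s₀}} + ‖t·f‖_{X^b_{s₁}}`. -/
def Ynorm (a : ℝ) (χ₀ χ : ℝ → ℝ) (b s₀ s₁ : ℝ) (f : ℝ × ℝ → ℂ) : ℝ :=
  Xnorm a χ₀ χ b s₀ (fun p => (p.1 : ℂ) * f p) +
    Xnorm a χ₀ χ b s₁ (fun p => (p.2 : ℂ) * f p)

/-- The norm `‖f‖_{Z^b_s} = ‖f‖_{X^b_s} + ‖f‖_{Y^b_{s-2s*,s}}`, where `s* = 1/2 + a/2`. -/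
def Znorm (a : ℝ) (χ₀ χ : ℝ → ℝ) (b s : ℝ) (f : ℝ × ℝ → ℂ) : ℝ :=
  Xnorm a χ₀ χ b s f + Ynorm a χ₀ χ b (s - 2 * (1 / 2 + a / 2)) s f

/-- The norm `‖f‖_{X̃^b_s}`. -/
def XtildeNorm (a b s : ℝ) (f : ℝ × ℝ → ℂ) : ℝ :=
  (∫ p : ℝ × ℝ, (1 + |p.2 - disp a p.1|) ^ (2 * b) * (1 + |p.1|) ^ (2 * s) *
    ‖FT2 f p.1 p.2‖ ^ 2) ^ ((1 : ℝ) / 2)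

/-- The Sobolev norm `‖g‖_{H^s} = (∫ (1+|ξ|)^{2s} |ĝ(ξ)|² dξ)^{1/2}`. -/
def Hnorm (s : ℝ) (g : ℝ → ℂ) : ℝ :=
  (∫ ξ : ℝ, (1 + |ξ|) ^ (2 * s) * ‖FT1 g ξ‖ ^ 2) ^ ((1 : ℝ) / 2)

/-- The weighted norm `‖g‖_{F^s} = ‖g‖_{H^s} + ‖x·g‖_{H^{s-2s*}}` (here `sstar = s*`). -/
def Fnorm (sstar s : ℝ) (g : ℝ → ℂ) : ℝ :=
  Hnorm s g + Hnorm (s - 2 * sstar) (fun x => (x : ℂ) * g x)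

/-- The `L^p` norm `(∫ ‖f‖^p)^{1/p}`. -/
def Lpnorm {α : Type*} [MeasureSpace α] {E : Type*} [NormedAddCommGroup E]
    (p : ℝ) (f : α → E) : ℝ :=
  (∫ x, ‖f x‖ ^ p) ^ (1 / p)

/-- The linear propagator `W(t)`, defined via Fourier inversion so that its Fourier
transform in `x` is `e^{itω(ξ)} û₀(ξ)`. -/
def Wgrp (a : ℝ) (u₀ : ℝ → ℂ) (t x : ℝ) : ℂ :=
  ((1 / (2 * Real.pi) : ℝ) : ℂ) *
    ∫ ξ : ℝ, Complex.exp (-(Complex.I * ((x * ξ : ℝ) : ℂ))) *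
      (Complex.exp (Complex.I * ((t * disp a ξ : ℝ) : ℂ)) * FT1 u₀ ξ)

/-- The Fourier multiplier `D^σ` with symbol `|ξ|^σ`, via Fourier inversion. -/
def Dop (σ : ℝ) (g : ℝ → ℂ) (x : ℝ) : ℂ :=
  ((1 / (2 * Real.pi) : ℝ) : ℂ) *
    ∫ ξ : ℝ, Complex.exp (-(Complex.I * ((x * ξ : ℝ) : ℂ))) *
      (((|ξ| ^ σ : ℝ) : ℂ) * FT1 g ξ)

open Set
open scoped ENNReal

/-! ### Van der Corput estimates -/

section VanDerCorput

variable {A B : ℝ} {ψ ψ' ψ'' : ℝ → ℝ}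

/-- Integrating `(w e^{iψ})'` leaves the error term `i w' + (1 - w ψ')`, so a good multiplier `w`
is a slowly varying approximation of `1 / ψ'`. -/
theorem norm_integral_cexp_I_mul_le_of_multiplier (hAB : A ≤ B) {w w' b : ℝ → ℝ}
    (hψ : ∀ x ∈ Icc A B, HasDerivAt ψ (ψ' x) x) (hψ' : ContinuousOn ψ' (Icc A B))
    (hw : ∀ x ∈ Icc A B, HasDerivAt w (w' x) x) (hw' : ContinuousOn w' (Icc A B))
    (hb : IntervalIntegrable b volume A B)
    (hle : ∀ x ∈ Icc A B, |w' x| + |1 - w x * ψ' x| ≤ b x) :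
    ‖∫ x in A..B, exp (I * (ψ x : ℂ))‖ ≤ |w A| + |w B| + ∫ x in A..B, b x := by
  set e : ℝ → ℂ := fun x => exp (I * (ψ x : ℂ))
  have norm_e (x : ℝ) : ‖e x‖ = 1 := norm_exp_I_mul_ofReal _
  have he (x) (hx : x ∈ Icc A B) : HasDerivAt e (e x * (I * (ψ' x : ℂ))) x :=
    ((hψ x hx).ofReal_comp.const_mul I).cexp
  have hwe (x) (hx : x ∈ Icc A B) : HasDerivAt (fun x => (w x : ℂ) * e x)
      ((w' x : ℂ) * e x + (w x : ℂ) * (e x * (I * (ψ' x : ℂ)))) x :=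
    (hw x hx).ofReal_comp.mul (he x hx)
  have ec : ContinuousOn e (Icc A B) := HasDerivAt.continuousOn he
  have wc : ContinuousOn (fun x => (w x : ℂ)) (Icc A B) :=
    continuous_ofReal.comp_continuousOn (HasDerivAt.continuousOn hw)
  have w'c : ContinuousOn (fun x => (w' x : ℂ)) (Icc A B) := continuous_ofReal.comp_continuousOn hw'
  have ψ'c : ContinuousOn (fun x => (ψ' x : ℂ)) (Icc A B) := continuous_ofReal.comp_continuousOn hψ'
  rw [← uIcc_of_le hAB] at hwe ec wc w'c ψ'c
  have hint : IntervalIntegrable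
      (fun x => (w' x : ℂ) * e x + (w x : ℂ) * (e x * (I * (ψ' x : ℂ)))) volume A B :=
    ((w'c.mul ec).add (wc.mul (ec.mul (continuousOn_const.mul ψ'c)))).intervalIntegrable
  have herror : ‖(∫ x in A..B, e x) - -I * ((w B : ℂ) * e B - (w A : ℂ) * e A)‖ ≤
      ∫ x in A..B, b x := by
    rw [← intervalIntegral.integral_eq_sub_of_hasDerivAt hwe hint,
      ← intervalIntegral.integral_const_mul,
      ← intervalIntegral.integral_sub ec.intervalIntegrable (hint.const_mul _)]
    refine intervalIntegral.norm_integral_le_of_norm_le hAB (.of_forall fun x hx => ?_) hb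
    have hfactor : e x - -I * ((w' x : ℂ) * e x + (w x : ℂ) * (e x * (I * (ψ' x : ℂ)))) =
        (I * (w' x : ℂ) + ((1 - w x * ψ' x : ℝ) : ℂ)) * e x := by
      push_cast
      linear_combination (e x * w x * ψ' x) * I_sq
    rw [hfactor, norm_mul, norm_e, mul_one]
    refine (norm_add_le _ _).trans ?_
    rw [norm_mul, norm_I, one_mul, norm_real, norm_real]
    exact hle x (Ioc_subset_Icc_self hx)
  have hboundary : ‖-I * ((w B : ℂ) * e B - (w A : ℂ) * e A)‖ ≤ |w A| + |w B| := by
    rw [norm_mul, norm_neg, norm_I, one_mul, add_comm]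
    refine (norm_sub_le _ _).trans_eq ?_
    simp only [norm_mul, norm_e, mul_one, norm_real, Real.norm_eq_abs]
  linarith [norm_sub_norm_le (∫ x in A..B, e x) (-I * ((w B : ℂ) * e B - (w A : ℂ) * e A))]

theorem abs_div_sq_add_sq_le {r : ℝ} (hr : 0 < r) (u : ℝ) :
    |u / (r ^ 2 + u ^ 2)| ≤ 1 / 2 / r := by
  have hpos : 0 < r ^ 2 + u ^ 2 := by positivity
  rw [abs_div, abs_of_pos hpos, div_div, div_le_div_iff₀ hpos (by positivity)]
  nlinarith [sq_nonneg (|u| - r), sq_abs u]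

theorem abs_arctanMultiplier_error_le {r v : ℝ} (hr : 0 < r) (hv : r ^ 2 ≤ v) (u : ℝ) :
    |v * (r ^ 2 - u ^ 2) / (r ^ 2 + u ^ 2) ^ 2| + |1 - u / (r ^ 2 + u ^ 2) * u| ≤
      2 * (v / (r ^ 2 + u ^ 2)) := by
  have hpos : 0 < r ^ 2 + u ^ 2 := by positivity
  have hv0 : 0 ≤ v := (sq_nonneg r).trans hv
  have hderiv : |v * (r ^ 2 - u ^ 2) / (r ^ 2 + u ^ 2) ^ 2| ≤ v / (r ^ 2 + u ^ 2) := by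
    rw [abs_div, abs_mul, abs_of_nonneg hv0, abs_of_pos (pow_pos hpos 2),
      pow_two (r ^ 2 + u ^ 2), ← div_div]
    gcongr
    rw [div_le_iff₀ hpos]
    gcongr
    rw [abs_le]
    constructor <;> nlinarith [sq_nonneg u, sq_nonneg r]
  have hdefect : |1 - u / (r ^ 2 + u ^ 2) * u| ≤ v / (r ^ 2 + u ^ 2) := by
    have heq : 1 - u / (r ^ 2 + u ^ 2) * u = r ^ 2 / (r ^ 2 + u ^ 2) := by
      field_simp
      ring
    rw [heq, abs_of_nonneg (by positivity)]
    gcongr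
  linarith

/-- The multiplier is `ψ' / (r² + ψ'²)`: it stays bounded at stationary points, and the error it
produces is dominated by the derivative of `(2 / r) arctan (ψ' / r)`. -/
theorem norm_integral_cexp_I_mul_le_of_sq_le_deriv2 (hAB : A ≤ B) {r : ℝ} (hr : 0 < r)
    (hψ : ∀ x ∈ Icc A B, HasDerivAt ψ (ψ' x) x)
    (hψ' : ∀ x ∈ Icc A B, HasDerivAt ψ' (ψ'' x) x) (hψ''c : ContinuousOn ψ'' (Icc A B))
    (hψ'' : ∀ x ∈ Icc A B, r ^ 2 ≤ ψ'' x) :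
    ‖∫ x in A..B, exp (I * (ψ x : ℂ))‖ ≤ (1 + 2 * Real.pi) / r := by
  have hψ'c : ContinuousOn ψ' (Icc A B) := HasDerivAt.continuousOn hψ'
  have hpos (x : ℝ) : 0 < r ^ 2 + ψ' x ^ 2 := by positivity
  have hw (x) (hx : x ∈ Icc A B) : HasDerivAt (fun x => ψ' x / (r ^ 2 + ψ' x ^ 2))
      (ψ'' x * (r ^ 2 - ψ' x ^ 2) / (r ^ 2 + ψ' x ^ 2) ^ 2) x := by
    refine ((hψ' x hx).div (((hψ' x hx).pow 2).const_add (r ^ 2)) (hpos x).ne').congr_deriv ?_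
    simp only [Pi.pow_apply, Nat.cast_ofNat]
    ring
  have hden : ContinuousOn (fun x => r ^ 2 + ψ' x ^ 2) (Icc A B) :=
    continuousOn_const.add (hψ'c.pow 2)
  have hw'c : ContinuousOn (fun x => ψ'' x * (r ^ 2 - ψ' x ^ 2) / (r ^ 2 + ψ' x ^ 2) ^ 2)
      (Icc A B) :=
    (hψ''c.mul (continuousOn_const.sub (hψ'c.pow 2))).div (hden.pow 2)
      fun x _ => (pow_pos (hpos x) 2).ne'
  have hbi : IntervalIntegrable (fun x => 2 * (ψ'' x / (r ^ 2 + ψ' x ^ 2))) volume A B :=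
    ContinuousOn.intervalIntegrable <| by
      rw [uIcc_of_le hAB]
      exact continuousOn_const.mul (hψ''c.div hden fun x _ => (hpos x).ne')
  have hFTC : ∫ x in A..B, 2 * (ψ'' x / (r ^ 2 + ψ' x ^ 2)) =
      2 / r * Real.arctan (ψ' B / r) - 2 / r * Real.arctan (ψ' A / r) := by
    refine intervalIntegral.integral_eq_sub_of_hasDerivAt
      (f := fun x => 2 / r * Real.arctan (ψ' x / r)) (fun x hx => ?_) hbi
    rw [uIcc_of_le hAB] at hx
    refine (((hψ' x hx).div_const r).arctan.const_mul (2 / r)).congr_deriv ?_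
    have := (hpos x).ne'
    field_simp
  refine (norm_integral_cexp_I_mul_le_of_multiplier hAB hψ hψ'c hw hw'c hbi
    fun x hx => abs_arctanMultiplier_error_le hr (hψ'' x hx) (ψ' x)).trans ?_
  have harctan : Real.arctan (ψ' B / r) - Real.arctan (ψ' A / r) ≤ Real.pi := by
    linarith [Real.arctan_lt_pi_div_two (ψ' B / r), Real.neg_pi_div_two_lt_arctan (ψ' A / r)]
  calc _ ≤ 1 / 2 / r + 1 / 2 / r +
        (2 / r * Real.arctan (ψ' B / r) - 2 / r * Real.arctan (ψ' A / r)) := by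
        rw [hFTC]
        gcongr <;> exact abs_div_sq_add_sq_le hr _
    _ = 1 / r + 2 / r * (Real.arctan (ψ' B / r) - Real.arctan (ψ' A / r)) := by ring
    _ ≤ 1 / r + 2 / r * Real.pi := by gcongr
    _ = (1 + 2 * Real.pi) / r := by ring

theorem norm_integral_cexp_I_mul_le_of_le_deriv (hAB : A ≤ B) {r : ℝ} (hr : 0 < r) {b : ℝ → ℝ}
    (hψ : ∀ x ∈ Icc A B, HasDerivAt ψ (ψ' x) x)
    (hψ' : ∀ x ∈ Icc A B, HasDerivAt ψ' (ψ'' x) x) (hψ''c : ContinuousOn ψ'' (Icc A B))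
    (hrψ' : ∀ x ∈ Icc A B, r ≤ ψ' x) (hb : IntervalIntegrable b volume A B)
    (hψ'' : ∀ x ∈ Icc A B, |ψ'' x| ≤ b x * ψ' x ^ 2) :
    ‖∫ x in A..B, exp (I * (ψ x : ℂ))‖ ≤ 2 / r + ∫ x in A..B, b x := by
  have hψ'c : ContinuousOn ψ' (Icc A B) := HasDerivAt.continuousOn hψ'
  have hpos (x) (hx : x ∈ Icc A B) : 0 < ψ' x := hr.trans_le (hrψ' x hx)
  have hw (x) (hx : x ∈ Icc A B) : HasDerivAt (fun x => (ψ' x)⁻¹) (-ψ'' x / ψ' x ^ 2) x :=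
    (hψ' x hx).inv (hpos x hx).ne'
  have herror (x) (hx : x ∈ Icc A B) :
      |-ψ'' x / ψ' x ^ 2| + |1 - (ψ' x)⁻¹ * ψ' x| ≤ b x := by
    rw [inv_mul_cancel₀ (hpos x hx).ne', sub_self, abs_zero, add_zero, abs_div, abs_neg, abs_sq,
      div_le_iff₀ (pow_pos (hpos x hx) 2)]
    exact hψ'' x hx
  have hboundary (x) (hx : x ∈ Icc A B) : |(ψ' x)⁻¹| ≤ 1 / r := by
    rw [abs_of_pos (inv_pos.2 (hpos x hx)), one_div]
    exact inv_anti₀ hr (hrψ' x hx)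
  refine (norm_integral_cexp_I_mul_le_of_multiplier hAB hψ hψ'c hw
    (hψ''c.neg.div (hψ'c.pow 2) fun x hx => (pow_pos (hpos x hx) 2).ne') hb herror).trans ?_
  calc _ ≤ 1 / r + 1 / r + ∫ x in A..B, b x := by
        gcongr
        · exact hboundary A (left_mem_Icc.2 hAB)
        · exact hboundary B (right_mem_Icc.2 hAB)
    _ = 2 / r + ∫ x in A..B, b x := by ring

end VanDerCorput

/-! ### The dispersive kernel -/

section PowerPhase

variable {m k : ℝ}

/-- The phase `t η^m - x η^k` on the half line. With `m = (2 + a) / (1 + β)` and `k = 1 / (1 + β)`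
it is the phase `t ω(ξ) - x ξ` written in the variable `η = ξ^{1+β}`. -/
def powerPhase (m k t x η : ℝ) : ℝ := t * η ^ m - x * η ^ k

theorem continuous_powerPhase (hm : 0 ≤ m) (hk : 0 ≤ k) (t x : ℝ) :
    Continuous (powerPhase m k t x) :=
  (continuous_const.mul (Real.continuous_rpow_const hm)).sub
    (continuous_const.mul (Real.continuous_rpow_const hk))

theorem hasDerivAt_powerPhase (m k t x : ℝ) {η : ℝ} (hη : η ≠ 0) :
    HasDerivAt (powerPhase m k t x) (powerPhase (m - 1) (k - 1) (t * m) (x * k) η) η := by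
  refine (((Real.hasDerivAt_rpow_const (Or.inl hη)).const_mul t).sub
    ((Real.hasDerivAt_rpow_const (Or.inl hη)).const_mul x)).congr_deriv ?_
  simp only [powerPhase, mul_assoc]

theorem continuousOn_powerPhase_Icc_one (m k t x B : ℝ) :
    ContinuousOn (powerPhase m k t x) (Icc 1 B) :=
  HasDerivAt.continuousOn fun _ hη => hasDerivAt_powerPhase m k t x (by linarith [hη.1])

/-- For `x ≥ 0` the phase may have a stationary point, but `k ≤ 1` makes it convex. -/
theorem norm_integral_cexp_powerPhase_le_of_nonneg (hm : 2 ≤ m) (hk0 : 0 ≤ k) (hk1 : k ≤ 1)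
    {x B : ℝ} (hx : 0 ≤ x) (hB : 1 ≤ B) :
    ‖∫ η in (1 : ℝ)..B, exp (I * (powerPhase m k 1 x η : ℂ))‖ ≤ 1 + 2 * Real.pi := by
  have hne (η) (hη : η ∈ Icc 1 B) : η ≠ 0 := by linarith [hη.1]
  refine (norm_integral_cexp_I_mul_le_of_sq_le_deriv2 hB one_pos
    (fun η hη => hasDerivAt_powerPhase m k 1 x (hne η hη))
    (fun η hη => hasDerivAt_powerPhase _ _ _ _ (hne η hη))
    (continuousOn_powerPhase_Icc_one _ _ _ _ B) fun η hη => ?_).trans_eq (div_one _)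
  have hη0 : 0 ≤ η := by linarith [hη.1]
  have hmain : 1 ≤ η ^ (m - 1 - 1) := Real.one_le_rpow hη.1 (by linarith)
  have hconvex : 0 ≤ x * k * (1 - k) * η ^ (k - 1 - 1) :=
    mul_nonneg (mul_nonneg (mul_nonneg hx hk0) (by linarith)) (Real.rpow_nonneg hη0 _)
  have hcoeff : 1 ≤ m * (m - 1) := by nlinarith
  calc (1 : ℝ) ^ 2 ≤ 1 * m * (m - 1) * η ^ (m - 1 - 1) := by nlinarith
    _ ≤ powerPhase (m - 1 - 1) (k - 1 - 1) (1 * m * (m - 1)) (x * k * (k - 1)) η := by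
      unfold powerPhase
      linarith

theorem abs_powerPhase_deriv2_le (hm : 2 ≤ m) (hk0 : 0 ≤ k) (hk1 : k ≤ 1) {x η : ℝ} (hx : x ≤ 0)
    (hη : 1 ≤ η) :
    |powerPhase (m - 1 - 1) (k - 1 - 1) (1 * m * (m - 1)) (x * k * (k - 1)) η| ≤
      η ^ (-2 : ℝ) * powerPhase (m - 1) (k - 1) (1 * m) (x * k) η ^ 2 := by
  have hη0 : 0 < η := by linarith
  have pull (c : ℝ) : η ^ (c - 1) = η ^ (c - 1 - 1) * η := by
    rw [← Real.rpow_add_one hη0.ne', sub_add_cancel]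
  set P := η ^ (m - 1 - 1) with hP
  set Q := -x * k * η ^ (k - 1 - 1) with hQ
  have hP1 : 1 ≤ P := Real.one_le_rpow hη (by linarith)
  have hQ0 : 0 ≤ Q := mul_nonneg (mul_nonneg (by linarith) hk0) (Real.rpow_nonneg hη0.le _)
  have hfirst : powerPhase (m - 1) (k - 1) (1 * m) (x * k) η = (m * P + Q) * η := by
    rw [powerPhase, pull m, pull k, ← hP, hQ]
    ring
  have hsecond : powerPhase (m - 1 - 1) (k - 1 - 1) (1 * m * (m - 1)) (x * k * (k - 1)) η =
      m * (m - 1) * P - (1 - k) * Q := by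
    rw [powerPhase, ← hP, hQ]
    ring
  have hmP : m ≤ m * P + Q := by nlinarith
  have hsq : m * (m * P + Q) ≤ (m * P + Q) ^ 2 := by
    rw [pow_two]
    gcongr
  rw [hfirst, hsecond, Real.rpow_neg hη0.le, Real.rpow_two, mul_pow, mul_comm ((m * P + Q) ^ 2),
    inv_mul_cancel_left₀ (by positivity)]
  refine le_trans ?_ hsq
  have hPcoeff : 0 ≤ m * (m - 1) * P := mul_nonneg (by nlinarith) (by linarith)
  have hQcoeff : 0 ≤ (1 - k) * Q := mul_nonneg (by linarith) hQ0
  calc |m * (m - 1) * P - (1 - k) * Q| ≤ m * (m - 1) * P + (1 - k) * Q := by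
        rw [abs_le]
        constructor <;> linarith
    _ ≤ m * m * P + m * Q := by
        gcongr <;> nlinarith
    _ = m * (m * P + Q) := by ring

/-- For `x ≤ 0` the phase has no stationary point. -/
theorem norm_integral_cexp_powerPhase_le_of_nonpos (hm : 2 ≤ m) (hk0 : 0 ≤ k) (hk1 : k ≤ 1)
    {x B : ℝ} (hx : x ≤ 0) (hB : 1 ≤ B) :
    ‖∫ η in (1 : ℝ)..B, exp (I * (powerPhase m k 1 x η : ℂ))‖ ≤ 3 := by
  have hne (η) (hη : η ∈ Icc 1 B) : η ≠ 0 := by linarith [hη.1]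
  have hzero : (0 : ℝ) ∉ uIcc 1 B := by
    rw [uIcc_of_le hB]
    exact fun h => hne 0 h rfl
  refine (norm_integral_cexp_I_mul_le_of_le_deriv hB one_pos (b := fun η => η ^ (-2 : ℝ))
    (fun η hη => hasDerivAt_powerPhase m k 1 x (hne η hη))
    (fun η hη => hasDerivAt_powerPhase _ _ _ _ (hne η hη))
    (continuousOn_powerPhase_Icc_one _ _ _ _ B) (fun η hη => ?_)
    (intervalIntegral.intervalIntegrable_rpow (Or.inr hzero))
    fun η hη => abs_powerPhase_deriv2_le hm hk0 hk1 hx hη.1).trans ?_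
  · have hmain : 1 ≤ η ^ (m - 1) := Real.one_le_rpow hη.1 (by linarith)
    have hrest : 0 ≤ -x * k * η ^ (k - 1) :=
      mul_nonneg (mul_nonneg (by linarith) hk0) (Real.rpow_nonneg (by linarith [hη.1]) _)
    unfold powerPhase
    nlinarith
  · rw [integral_rpow (Or.inr ⟨by norm_num, hzero⟩)]
    have htop : 0 ≤ B ^ (-2 + 1 : ℝ) := Real.rpow_nonneg (by linarith) _
    rw [Real.one_rpow]
    norm_num at htop ⊢
    linarith

theorem norm_integral_cexp_powerPhase_le (hm : 2 ≤ m) (hk0 : 0 ≤ k) (hk1 : k ≤ 1) (x : ℝ) {B : ℝ}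
    (hB : 0 ≤ B) : ‖∫ η in (0 : ℝ)..B, exp (I * (powerPhase m k 1 x η : ℂ))‖ ≤ 10 := by
  have htrivial (b : ℝ) (hb : b ∈ Icc 0 1) :
      ‖∫ η in (0 : ℝ)..b, exp (I * (powerPhase m k 1 x η : ℂ))‖ ≤ 1 := by
    refine (intervalIntegral.norm_integral_le_of_norm_le_const (C := 1)
      fun η _ => (norm_exp_I_mul_ofReal _).le).trans ?_
    rw [sub_zero, abs_of_nonneg hb.1, one_mul]
    exact hb.2
  rcases le_total B 1 with hB1 | hB1
  · linarith [htrivial B ⟨hB, hB1⟩]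
  have hcont : Continuous fun η => exp (I * (powerPhase m k 1 x η : ℂ)) := by
    have := continuous_powerPhase (show 0 ≤ m by linarith) hk0 1 x
    fun_prop
  have htail : ‖∫ η in (1 : ℝ)..B, exp (I * (powerPhase m k 1 x η : ℂ))‖ ≤ 9 := by
    rcases le_total 0 x with hx | hx
    · linarith [norm_integral_cexp_powerPhase_le_of_nonneg hm hk0 hk1 hx hB1, Real.pi_lt_four]
    · linarith [norm_integral_cexp_powerPhase_le_of_nonpos hm hk0 hk1 hx hB1]
  rw [← intervalIntegral.integral_add_adjacent_intervals (b := 1)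
    (hcont.intervalIntegrable _ _) (hcont.intervalIntegrable _ _)]
  linarith [norm_add_le (∫ η in (0 : ℝ)..1, exp (I * (powerPhase m k 1 x η : ℂ)))
    (∫ η in (1 : ℝ)..B, exp (I * (powerPhase m k 1 x η : ℂ))), htrivial 1 ⟨zero_le_one, le_rfl⟩]

theorem norm_integral_cexp_powerPhase_le_rpow_of_pos (hm : 2 ≤ m) (hk0 : 0 ≤ k) (hk1 : k ≤ 1)
    {t : ℝ} (ht : 0 < t) (x : ℝ) {B : ℝ} (hB : 0 ≤ B) :
    ‖∫ η in (0 : ℝ)..B, exp (I * (powerPhase m k t x η : ℂ))‖ ≤ 10 * t ^ (-(1 / m)) := by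
  set c : ℝ := t ^ (1 / m) with hc
  have hc0 : 0 < c := Real.rpow_pos_of_pos ht _
  have hcm : c ^ m = t := by
    rw [hc, ← Real.rpow_mul ht.le, one_div_mul_cancel (by linarith), Real.rpow_one]
  have hscale : ∫ η in (0 : ℝ)..B, exp (I * (powerPhase m k t x η : ℂ)) =
      ∫ η in (0 : ℝ)..B, exp (I * (powerPhase m k 1 (x / c ^ k) (c * η) : ℂ)) := by
    refine intervalIntegral.integral_congr fun η hη => ?_
    rw [uIcc_of_le hB] at hη
    have hck : c ^ k ≠ 0 := (Real.rpow_pos_of_pos hc0 _).ne'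
    have : powerPhase m k t x η = powerPhase m k 1 (x / c ^ k) (c * η) := by
      rw [powerPhase, powerPhase, Real.mul_rpow hc0.le hη.1, Real.mul_rpow hc0.le hη.1, hcm]
      field_simp
    simp only [this]
  rw [hscale, intervalIntegral.integral_comp_mul_left
    (fun ζ => exp (I * (powerPhase m k 1 (x / c ^ k) ζ : ℂ))) hc0.ne', norm_smul, mul_zero,
    Real.norm_eq_abs, abs_of_pos (inv_pos.2 hc0), Real.rpow_neg ht.le, ← hc, mul_comm]
  gcongr
  exact norm_integral_cexp_powerPhase_le hm hk0 hk1 _ (by positivity)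

theorem norm_integral_cexp_powerPhase_le_rpow (hm : 2 ≤ m) (hk0 : 0 ≤ k) (hk1 : k ≤ 1)
    {t : ℝ} (ht : t ≠ 0) (x : ℝ) {B : ℝ} (hB : 0 ≤ B) :
    ‖∫ η in (0 : ℝ)..B, exp (I * (powerPhase m k t x η : ℂ))‖ ≤ 10 * |t| ^ (-(1 / m)) := by
  rcases ht.lt_or_gt with hneg | hpos
  · have hconj : ∫ η in (0 : ℝ)..B, exp (I * (powerPhase m k t x η : ℂ)) =
        starRingEnd ℂ (∫ η in (0 : ℝ)..B, exp (I * (powerPhase m k (-t) (-x) η : ℂ))) := by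
      rw [← intervalIntegral.intervalIntegral_conj]
      refine intervalIntegral.integral_congr fun η _ => ?_
      simp only [powerPhase, ← exp_conj, map_mul, conj_I, conj_ofReal]
      push_cast
      ring_nf
    rw [hconj, norm_conj, abs_of_neg hneg]
    exact norm_integral_cexp_powerPhase_le_rpow_of_pos hm hk0 hk1 (neg_pos.2 hneg) (-x) hB
  · rw [abs_of_pos hpos]
    exact norm_integral_cexp_powerPhase_le_rpow_of_pos hm hk0 hk1 hpos x hB

end PowerPhase

section DispersiveKernel

variable {a β : ℝ}

theorem disp_of_nonneg (ha : 0 ≤ a) {ξ : ℝ} (hξ : 0 ≤ ξ) : disp a ξ = ξ ^ (2 + a) := by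
  rw [disp, abs_of_nonneg hξ, ← Real.rpow_one_add' hξ (by linarith), ← add_assoc,
    one_add_one_eq_two]

theorem disp_neg (a ξ : ℝ) : disp a (-ξ) = -disp a ξ := by
  rw [disp, disp, abs_neg, neg_mul]

theorem continuous_disp (ha : 0 ≤ a) : Continuous (disp a) :=
  continuous_id.mul ((Real.continuous_rpow_const (by linarith)).comp continuous_abs)

/-- The change of variables `η = ξ^{1+β}` absorbs the weight into the measure. -/
theorem integral_rpow_mul_cexp_eq (hβ : 0 ≤ β) (ha : 0 ≤ a) (t x : ℝ) {N : ℝ} (hN : 0 ≤ N) :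
    ∫ ξ in (0 : ℝ)..N, ((|ξ| ^ β : ℝ) : ℂ) * exp (I * ((t * disp a ξ - x * ξ : ℝ) : ℂ)) =
      (1 / (1 + β)) • ∫ η in (0 : ℝ)..N ^ (1 + β),
        exp (I * (powerPhase ((2 + a) / (1 + β)) (1 / (1 + β)) t x η : ℂ)) := by
  have hβ1 : 0 < 1 + β := by linarith
  set g : ℝ → ℂ := fun η =>
    exp (I * (powerPhase ((2 + a) / (1 + β)) (1 / (1 + β)) t x η : ℂ)) with hg
  have hgc : Continuous g := by
    have := continuous_powerPhase (m := (2 + a) / (1 + β)) (k := 1 / (1 + β))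
      (by positivity) (by positivity) t x
    fun_prop
  have hsubst := intervalIntegral.integral_deriv_smul_comp (a := 0) (b := N)
    (f := fun ξ : ℝ => ξ ^ (1 + β)) (f' := fun ξ => (1 + β) * ξ ^ β) (g := g)
    (fun ξ _ => (Real.hasDerivAt_rpow_const (Or.inr (by linarith))).congr_deriv
      (by rw [add_sub_cancel_left]))
    (continuous_const.mul (Real.continuous_rpow_const hβ)).continuousOn hgc
  rw [Real.zero_rpow hβ1.ne'] at hsubst
  rw [← hsubst, ← intervalIntegral.integral_smul]
  refine intervalIntegral.integral_congr fun ξ hξ => ?_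
  rw [uIcc_of_le hN] at hξ
  have hphase : powerPhase ((2 + a) / (1 + β)) (1 / (1 + β)) t x (ξ ^ (1 + β)) =
      t * disp a ξ - x * ξ := by
    rw [powerPhase, ← Real.rpow_mul hξ.1, ← Real.rpow_mul hξ.1, mul_div_cancel₀ _ hβ1.ne',
      mul_one_div_cancel hβ1.ne', Real.rpow_one, disp_of_nonneg ha hξ.1]
  have hweight : 1 / (1 + β) * ((1 + β) * ξ ^ β) = ξ ^ β := by field_simp
  simp only [hg, Function.comp_apply, hphase, abs_of_nonneg hξ.1, real_smul]
  rw [← mul_assoc, ← ofReal_mul, hweight]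

theorem norm_integral_rpow_mul_cexp_le (hβ0 : 0 ≤ β) (hβ : β ≤ a / 2) {t : ℝ} (ht : t ≠ 0)
    (x : ℝ) {N : ℝ} (hN : 0 ≤ N) :
    ‖∫ ξ in (0 : ℝ)..N, ((|ξ| ^ β : ℝ) : ℂ) * exp (I * ((t * disp a ξ - x * ξ : ℝ) : ℂ))‖ ≤
      10 * |t| ^ (-((β + 1) / (2 + a))) := by
  have hβ1 : 0 < 1 + β := by linarith
  have hk1 : 1 / (1 + β) ≤ 1 := by rw [div_le_one hβ1]; linarith
  have hm : 2 ≤ (2 + a) / (1 + β) := by rw [le_div_iff₀ hβ1]; linarith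
  have hosc := norm_integral_cexp_powerPhase_le_rpow hm (by positivity) hk1 ht x
    (Real.rpow_nonneg hN (1 + β))
  rw [one_div_div, add_comm 1 β] at hosc
  rw [integral_rpow_mul_cexp_eq hβ0 (by linarith) t x hN, norm_smul,
    Real.norm_of_nonneg (by positivity), add_comm 1 β]
  rw [add_comm 1 β] at hk1
  exact (mul_le_of_le_one_left (norm_nonneg _) hk1).trans hosc

theorem norm_dispersiveKernel_le (hβ0 : 0 ≤ β) (hβ : β ≤ a / 2) {t : ℝ} (ht : t ≠ 0) (x : ℝ)
    {N : ℝ} (hN : 0 ≤ N) :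
    ‖∫ ξ in (-N)..N, ((|ξ| ^ β : ℝ) : ℂ) * exp (I * ((t * disp a ξ - x * ξ : ℝ) : ℂ))‖ ≤
      20 * |t| ^ (-((β + 1) / (2 + a))) := by
  have hcont : Continuous fun ξ : ℝ =>
      ((|ξ| ^ β : ℝ) : ℂ) * exp (I * ((t * disp a ξ - x * ξ : ℝ) : ℂ)) := by
    have := continuous_disp (a := a) (by linarith)
    have : Continuous fun ξ : ℝ => |ξ| ^ β := (Real.continuous_rpow_const hβ0).comp continuous_abs
    fun_prop
  have hreflect :
      ∫ ξ in (-N)..0, ((|ξ| ^ β : ℝ) : ℂ) * exp (I * ((t * disp a ξ - x * ξ : ℝ) : ℂ)) =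
      ∫ ξ in (0 : ℝ)..N, ((|ξ| ^ β : ℝ) : ℂ) * exp (I * ((-t * disp a ξ - -x * ξ : ℝ) : ℂ)) := by
    rw [← neg_zero, ← intervalIntegral.integral_comp_neg, neg_zero]
    simp only [disp_neg, abs_neg, mul_neg, neg_mul]
  rw [← intervalIntegral.integral_add_adjacent_intervals (b := 0)
    (hcont.intervalIntegrable _ _) (hcont.intervalIntegrable _ _), hreflect]
  have hleft := norm_integral_rpow_mul_cexp_le hβ0 hβ (neg_ne_zero.2 ht) (-x) hN
  have hright := norm_integral_rpow_mul_cexp_le hβ0 hβ ht x hN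
  rw [abs_neg] at hleft
  exact (norm_add_le _ _).trans (by linarith)

end DispersiveKernel

/-! ### The Hardy–Littlewood–Sobolev inequality -/

theorem lintegral_comp_abs_sub (g : ℝ → ℝ≥0∞) (t : ℝ) :
    ∫⁻ s, g |t - s| = 2 * ∫⁻ r in Ioi 0, g r := by
  have hright : ∫⁻ r in Ioi (0 : ℝ), g |r| = ∫⁻ r in Ioi 0, g r :=
    setLIntegral_congr_fun measurableSet_Ioi fun r hr => by rw [abs_of_pos hr]
  have hleft : ∫⁻ r in Iic (0 : ℝ), g |r| = ∫⁻ r in Ioi (0 : ℝ), g |r| := by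
    have hneg := (Measure.measurePreserving_neg (volume : Measure ℝ)).setLIntegral_comp_preimage_emb
      (Homeomorph.neg ℝ).measurableEmbedding (fun r => g |r|) (Ioi (0 : ℝ))
    simp only [abs_neg, neg_preimage, neg_Ioi, neg_zero] at hneg
    rw [← hneg, setLIntegral_congr Iio_ae_eq_Iic]
  rw [lintegral_sub_left_eq_self (fun r => g |r|) t,
    ← lintegral_add_compl _ (measurableSet_Ioi (a := (0 : ℝ))), compl_Ioi, hleft, hright, two_mul]

theorem setLIntegral_comp_abs_sub {S : Set ℝ} (hS : MeasurableSet S) (g : ℝ → ℝ≥0∞) (t : ℝ) :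
    ∫⁻ s in {s | |t - s| ∈ S}, g |t - s| = 2 * ∫⁻ r in Ioi 0 ∩ S, g r := by
  have hpre : MeasurableSet {s : ℝ | |t - s| ∈ S} :=
    (show Measurable fun s : ℝ => |t - s| by fun_prop) hS
  rw [← lintegral_indicator hpre, inter_comm, ← Measure.restrict_restrict hS,
    ← lintegral_indicator hS, ← lintegral_comp_abs_sub _ t]
  rfl

theorem setLIntegral_rpow_neg_near {γ R : ℝ} (hγ : γ < 1) (hR : 0 ≤ R) (t : ℝ) :
    ∫⁻ s in {s | |t - s| ≤ R}, ENNReal.ofReal (|t - s| ^ (-γ)) =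
      ENNReal.ofReal (2 / (1 - γ) * R ^ (1 - γ)) := by
  have hint : IntervalIntegrable (fun r : ℝ => r ^ (-γ)) volume 0 R :=
    intervalIntegral.intervalIntegrable_rpow' (by linarith)
  have hpow : ∫ r in (0 : ℝ)..R, r ^ (-γ) = R ^ (1 - γ) / (1 - γ) := by
    rw [integral_rpow (Or.inl (by linarith)), Real.zero_rpow (by linarith), sub_zero,
      neg_add_eq_sub]
  refine (setLIntegral_comp_abs_sub measurableSet_Iic
    (fun r => ENNReal.ofReal (r ^ (-γ))) t).trans ?_
  rw [Ioi_inter_Iic, ← ofReal_integral_eq_lintegral_ofReal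
      ((intervalIntegrable_iff_integrableOn_Ioc_of_le hR).1 hint)
      ((ae_restrict_mem measurableSet_Ioc).mono fun r hr => Real.rpow_nonneg hr.1.le _),
    ← intervalIntegral.integral_of_le hR, hpow, ← ENNReal.ofReal_ofNat 2,
    ← ENNReal.ofReal_mul zero_le_two]
  congr 1
  ring

theorem setLIntegral_rpow_neg_far {b R : ℝ} (hb : 1 < b) (hR : 0 < R) (t : ℝ) :
    ∫⁻ s in {s | R < |t - s|}, ENNReal.ofReal (|t - s| ^ (-b)) =
      ENNReal.ofReal (2 / (b - 1) * R ^ (1 - b)) := by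
  refine (setLIntegral_comp_abs_sub measurableSet_Ioi
    (fun r => ENNReal.ofReal (r ^ (-b))) t).trans ?_
  rw [Ioi_inter_Ioi, max_eq_right hR.le, ← ofReal_integral_eq_lintegral_ofReal
      (integrableOn_Ioi_rpow_of_lt (by linarith) hR)
      ((ae_restrict_mem measurableSet_Ioi).mono fun r hr => Real.rpow_nonneg (hR.trans hr).le _),
    integral_Ioi_rpow_of_lt (by linarith) hR, ← ENNReal.ofReal_ofNat 2,
    ← ENNReal.ofReal_mul zero_le_two, neg_add_eq_sub, ← neg_sub b 1, neg_div_neg_eq]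
  congr 1
  ring

theorem holderConjugate_two_div {γ : ℝ} (hγ : 0 < γ) (hγ2 : γ < 2) :
    (2 / (2 - γ)).HolderConjugate (2 / γ) := by
  have hpos : 0 < 2 - γ := by linarith
  rw [Real.holderConjugate_iff, lt_div_iff₀ hpos]
  exact ⟨by linarith, by field_simp; ring⟩

section HardyLittlewoodSobolev

variable {γ : ℝ} {f : ℝ → ℝ≥0∞}

theorem setLIntegral_mul_rpow_neg_far_le_holder (hγ : 0 < γ) (hγ2 : γ < 2)
    (hf : Measurable f) {R : ℝ} (hR : 0 < R) (t : ℝ) :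
    ∫⁻ s in {s | R < |t - s|}, f s * ENNReal.ofReal (|t - s| ^ (-γ)) ≤
      (∫⁻ s, f s ^ (2 / (2 - γ))) ^ (1 - γ / 2) * ENNReal.ofReal (2 / R) ^ (γ / 2) := by
  have : 0 < 2 - γ := by linarith
  have hkernel (s : ℝ) : ENNReal.ofReal (|t - s| ^ (-γ)) ^ (2 / γ) =
      ENNReal.ofReal (|t - s| ^ (-2 : ℝ)) := by
    rw [ENNReal.ofReal_rpow_of_nonneg (by positivity) (by positivity),
      ← Real.rpow_mul (abs_nonneg _)]
    congr 2
    field_simp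
  refine (ENNReal.lintegral_mul_le_Lp_mul_Lq _ (holderConjugate_two_div hγ hγ2) hf.aemeasurable
    (Measurable.aemeasurable (by fun_prop))).trans ?_
  simp only [hkernel]
  rw [setLIntegral_rpow_neg_far one_lt_two hR, one_div_div, one_div_div]
  have hRinv : 2 / (2 - 1) * R ^ (1 - 2 : ℝ) = 2 / R := by
    norm_num [Real.rpow_neg_one, div_eq_mul_inv]
  rw [hRinv, sub_div, div_self two_ne_zero]
  gcongr
  · linarith
  · exact Measure.restrict_le_self

/-- The radius in these two lemmas balances the contributions of small and large `|t - s|`. -/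
theorem setLIntegral_mul_rpow_neg_near_le (hγ1 : γ < 1) {x y : ℝ} (hx : 0 < x) (hy : 0 < y)
    (t : ℝ) :
    ∫⁻ s in {s | f s ≤ ENNReal.ofReal y} ∩ {s | |t - s| ≤ x * y ^ (-(2 / (2 - γ)))},
        f s * ENNReal.ofReal (|t - s| ^ (-γ)) ≤
      ENNReal.ofReal (2 / (1 - γ) * x ^ (1 - γ) * y ^ (2 / (2 - γ) - 1)) := by
  set R := x * y ^ (-(2 / (2 - γ))) with hR
  have hpos : 0 < 2 - γ := by linarith
  have hexp : 2 / (2 - γ) - 1 = 1 + -(2 / (2 - γ)) * (1 - γ) := by field_simp; ring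
  calc ∫⁻ s in {s | f s ≤ ENNReal.ofReal y} ∩ {s | |t - s| ≤ R},
          f s * ENNReal.ofReal (|t - s| ^ (-γ))
      ≤ ∫⁻ s in {s | f s ≤ ENNReal.ofReal y} ∩ {s | |t - s| ≤ R},
          ENNReal.ofReal y * ENNReal.ofReal (|t - s| ^ (-γ)) := by
        refine setLIntegral_mono (by fun_prop) fun s hs => ?_
        gcongr
        exact hs.1
    _ ≤ ∫⁻ s in {s | |t - s| ≤ R}, ENNReal.ofReal y * ENNReal.ofReal (|t - s| ^ (-γ)) :=
        lintegral_mono_set inter_subset_right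
    _ = ENNReal.ofReal (y * (2 / (1 - γ) * R ^ (1 - γ))) := by
        rw [lintegral_const_mul' _ _ ENNReal.ofReal_ne_top,
          setLIntegral_rpow_neg_near hγ1 (by positivity), ← ENNReal.ofReal_mul hy.le]
    _ = ENNReal.ofReal (2 / (1 - γ) * x ^ (1 - γ) * y ^ (2 / (2 - γ) - 1)) := by
        rw [hR, Real.mul_rpow hx.le (by positivity), ← Real.rpow_mul hy.le, hexp,
          Real.rpow_add hy, Real.rpow_one]
        congr 1
        ring

theorem setLIntegral_mul_rpow_neg_far_le (hγ0 : 0 < γ) (hγ2 : γ < 2) (hf : Measurable f)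
    {x y : ℝ} (hx : 0 < x) (hy : 0 < y)
    (hfx : ∫⁻ s, f s ^ (2 / (2 - γ)) ≤ ENNReal.ofReal x) (t : ℝ) :
    ∫⁻ s in {s | x * y ^ (-(2 / (2 - γ))) < |t - s|}, f s * ENNReal.ofReal (|t - s| ^ (-γ)) ≤
      ENNReal.ofReal (2 * x ^ (1 - γ) * y ^ (2 / (2 - γ) - 1)) := by
  have hpos : 0 < 2 - γ := by linarith
  have hexp : 2 / (2 - γ) - 1 = 2 / (2 - γ) * (γ / 2) := by field_simp; ring
  have hxexp : x ^ (1 - γ / 2) = x ^ (1 - γ) * x ^ (γ / 2) := by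
    rw [← Real.rpow_add hx]
    ring_nf
  calc ∫⁻ s in {s | x * y ^ (-(2 / (2 - γ))) < |t - s|}, f s * ENNReal.ofReal (|t - s| ^ (-γ))
      ≤ ENNReal.ofReal x ^ (1 - γ / 2) *
          ENNReal.ofReal (2 / (x * y ^ (-(2 / (2 - γ))))) ^ (γ / 2) :=
        (setLIntegral_mul_rpow_neg_far_le_holder hγ0 hγ2 hf (by positivity) t).trans
          (by gcongr; linarith)
    _ = ENNReal.ofReal (2 ^ (γ / 2) * x ^ (1 - γ) * y ^ (2 / (2 - γ) - 1)) := by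
        rw [ENNReal.ofReal_rpow_of_pos hx, ENNReal.ofReal_rpow_of_pos (by positivity),
          ← ENNReal.ofReal_mul (by positivity), Real.rpow_neg hy.le,
          Real.div_rpow zero_le_two (by positivity), Real.mul_rpow hx.le (by positivity),
          Real.inv_rpow (by positivity), ← Real.rpow_mul hy.le, ← hexp, hxexp]
        congr 1
        field_simp
    _ ≤ ENNReal.ofReal (2 * x ^ (1 - γ) * y ^ (2 / (2 - γ) - 1)) := by
        gcongr
        exact Real.rpow_le_self_of_one_le one_le_two (by linarith)

theorem setLIntegral_mul_rpow_neg_le (hγ0 : 0 < γ) (hγ1 : γ < 1) (hf : Measurable f) {x y : ℝ}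
    (hx : 0 < x) (hy : 0 < y) (hfx : ∫⁻ s, f s ^ (2 / (2 - γ)) ≤ ENNReal.ofReal x) (t : ℝ) :
    ∫⁻ s in {s | f s ≤ ENNReal.ofReal y}, f s * ENNReal.ofReal (|t - s| ^ (-γ)) ≤
      ENNReal.ofReal ((2 / (1 - γ) + 2) * x ^ (1 - γ) * y ^ (2 / (2 - γ) - 1)) := by
  have : 0 < 1 - γ := by linarith
  have hball : MeasurableSet {s : ℝ | |t - s| ≤ x * y ^ (-(2 / (2 - γ)))} :=
    measurableSet_le (by fun_prop) (by fun_prop)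
  have hfar : {s | f s ≤ ENNReal.ofReal y} \ {s | |t - s| ≤ x * y ^ (-(2 / (2 - γ)))} ⊆
      {s | x * y ^ (-(2 / (2 - γ))) < |t - s|} := fun s hs => not_le.1 (show ¬|t - s| ≤ _ from hs.2)
  rw [← lintegral_inter_add_sdiff _ _ hball]
  refine (add_le_add (setLIntegral_mul_rpow_neg_near_le hγ1 hx hy t)
    ((lintegral_mono_set hfar).trans
      (setLIntegral_mul_rpow_neg_far_le hγ0 (by linarith) hf hx hy hfx t))).trans_eq ?_
  rw [← ENNReal.ofReal_add (by positivity) (by positivity)]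
  congr 1
  ring

theorem setLIntegral_le_mul_rpow_neg_le (hγ0 : 0 < γ) (hγ1 : γ < 1) (hf : Measurable f)
    (h0 : ∫⁻ s, f s ^ (2 / (2 - γ)) ≠ 0) (htop : ∫⁻ s, f s ^ (2 / (2 - γ)) ≠ ∞)
    {t : ℝ} (ht : f t ≠ ∞) :
    f t * ∫⁻ s in {s | f s ≤ f t}, f s * ENNReal.ofReal (|t - s| ^ (-γ)) ≤
      ENNReal.ofReal (2 / (1 - γ) + 2) * (∫⁻ s, f s ^ (2 / (2 - γ))) ^ (1 - γ) *
        f t ^ (2 / (2 - γ)) := by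
  have : 0 < 1 - γ := by linarith
  rcases eq_or_ne (f t) 0 with hft | hft
  · simp [hft]
  set S := ∫⁻ s, f s ^ (2 / (2 - γ))
  have hS : 0 < S.toReal := ENNReal.toReal_pos h0 htop
  have hy : 0 < (f t).toReal := ENNReal.toReal_pos hft ht
  have hinner := setLIntegral_mul_rpow_neg_le hγ0 hγ1 hf hS hy (ENNReal.ofReal_toReal htop).ge t
  rw [ENNReal.ofReal_mul (by positivity), ENNReal.ofReal_mul (by positivity),
    ← ENNReal.ofReal_rpow_of_pos hS, ← ENNReal.ofReal_rpow_of_pos hy, ENNReal.ofReal_toReal htop,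
    ENNReal.ofReal_toReal ht] at hinner
  calc _ ≤ f t * (ENNReal.ofReal (2 / (1 - γ) + 2) * S ^ (1 - γ) * f t ^ (2 / (2 - γ) - 1)) := by
        gcongr
    _ = _ := by
        rw [ENNReal.rpow_sub _ _ hft ht, ENNReal.rpow_one, mul_left_comm,
          ENNReal.mul_div_cancel hft ht]

theorem lintegral_lintegral_le_two_mul_of_symm {k : ℝ → ℝ → ℝ≥0∞}
    (hk : Measurable (Function.uncurry k)) (hsymm : ∀ t s, k t s = k s t) (hf : Measurable f) :
    ∫⁻ t, ∫⁻ s, k t s ≤ 2 * ∫⁻ t, ∫⁻ s in {s | f s ≤ f t}, k t s := by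
  have hle : MeasurableSet {z : ℝ × ℝ | f z.2 ≤ f z.1} :=
    measurableSet_le (by fun_prop) (by fun_prop)
  set k' : ℝ × ℝ → ℝ≥0∞ := {z : ℝ × ℝ | f z.2 ≤ f z.1}.indicator (Function.uncurry k)
  have hk' : Measurable k' := hk.indicator hle
  have hsum (t s : ℝ) : k t s ≤ k' (t, s) + k' (s, t) := by
    rcases le_total (f s) (f t) with h | h
    · simp [k', h]
    · simp [k', h, hsymm t s]
  have hsection (t : ℝ) : ∫⁻ s, k' (t, s) = ∫⁻ s in {s | f s ≤ f t}, k t s := by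
    rw [← lintegral_indicator (measurableSet_le hf measurable_const)]
    rfl
  calc ∫⁻ t, ∫⁻ s, k t s ≤ ∫⁻ t, ∫⁻ s, (k' (t, s) + k' (s, t)) :=
        lintegral_mono fun t => lintegral_mono fun s => hsum t s
    _ = (∫⁻ t, ∫⁻ s, k' (t, s)) + ∫⁻ t, ∫⁻ s, k' (s, t) := by
        rw [← lintegral_add_left hk'.lintegral_prod_right']
        exact lintegral_congr fun t => lintegral_add_left (by fun_prop) _
    _ = 2 * ∫⁻ t, ∫⁻ s in {s | f s ≤ f t}, k t s := by
        rw [lintegral_lintegral_swap (f := fun t s => k' (s, t)) (by fun_prop), two_mul]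
        simp only [hsection]

/-- The kernel being symmetric, only the pairs with `f s ≤ f t` matter. -/
theorem hardy_littlewood_sobolev (hγ0 : 0 < γ) (hγ1 : γ < 1) (hf : Measurable f) :
    ∫⁻ t, ∫⁻ s, f t * f s * ENNReal.ofReal (|t - s| ^ (-γ)) ≤
      ENNReal.ofReal (4 / (1 - γ) + 4) * (∫⁻ s, f s ^ (2 / (2 - γ))) ^ (2 - γ) := by
  have : 0 < 1 - γ := by linarith
  have hp : 0 < 2 / (2 - γ) := div_pos two_pos (by linarith)
  set S := ∫⁻ s, f s ^ (2 / (2 - γ))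
  rcases eq_or_ne S ∞ with htop | htop
  · rw [htop, ENNReal.top_rpow_of_pos (by linarith), ENNReal.mul_top (by positivity)]
    exact le_top
  rcases eq_or_ne S 0 with h0 | h0
  · have hf0 : f =ᵐ[volume] 0 := by
      filter_upwards [(lintegral_eq_zero_iff (by fun_prop)).1 h0] with s hs
      simpa [hp.not_gt, hp] using hs
    refine le_of_eq_of_le (lintegral_eq_zero_of_ae_eq_zero ?_) zero_le
    filter_upwards [hf0] with t ht
    simp [ht]
  have hfin : ∀ᵐ t, f t ≠ ∞ := by
    filter_upwards [ae_lt_top (by fun_prop) htop] with t ht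
    exact ((ENNReal.rpow_lt_top_iff_of_pos hp).1 ht).ne
  calc ∫⁻ t, ∫⁻ s, f t * f s * ENNReal.ofReal (|t - s| ^ (-γ))
      ≤ 2 * ∫⁻ t, ∫⁻ s in {s | f s ≤ f t}, f t * f s * ENNReal.ofReal (|t - s| ^ (-γ)) :=
        lintegral_lintegral_le_two_mul_of_symm (by fun_prop)
          (fun t s => by rw [abs_sub_comm, mul_comm (f t)]) hf
    _ ≤ 2 * ∫⁻ t, ENNReal.ofReal (2 / (1 - γ) + 2) * S ^ (1 - γ) * f t ^ (2 / (2 - γ)) := by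
        gcongr 2 * ?_
        refine lintegral_mono_ae (hfin.mono fun t ht => ?_)
        simp only [mul_assoc]
        rw [lintegral_const_mul' _ _ ht, ← mul_assoc]
        exact setLIntegral_le_mul_rpow_neg_le hγ0 hγ1 hf h0 htop ht
    _ = ENNReal.ofReal (4 / (1 - γ) + 4) * S ^ (2 - γ) := by
        have hS : S ^ (2 - γ) = S ^ (1 - γ) * S := by
          rw [show 2 - γ = 1 - γ + 1 by ring, ENNReal.rpow_add _ _ h0 htop, ENNReal.rpow_one]
        rw [lintegral_const_mul _ (by fun_prop), hS, ← mul_assoc, ← mul_assoc, ← mul_assoc,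
          ← ENNReal.ofReal_ofNat 2, ← ENNReal.ofReal_mul zero_le_two]
        congr 3
        ring

end HardyLittlewoodSobolev

/-! ### The `T T*` argument -/

theorem norm_conj_mul_norm_rpow_sub_two {q : ℝ} (hq : 1 < q) (z : ℂ) :
    ‖starRingEnd ℂ z * ((‖z‖ ^ (q - 2) : ℝ) : ℂ)‖ = ‖z‖ ^ (q - 1) := by
  rw [norm_mul, norm_conj, norm_real, Real.norm_of_nonneg (by positivity),
    show q - 1 = 1 + (q - 2) by ring, Real.rpow_one_add' (norm_nonneg _) (by linarith)]

theorem conj_mul_norm_rpow_sub_two_mul_self {q : ℝ} (hq : 0 < q) (z : ℂ) :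
    starRingEnd ℂ z * ((‖z‖ ^ (q - 2) : ℝ) : ℂ) * z = ((‖z‖ ^ q : ℝ) : ℂ) := by
  have hexp : ‖z‖ ^ q = ‖z‖ ^ 2 * ‖z‖ ^ (q - 2) := by
    rw [← Real.rpow_two, ← Real.rpow_add' (norm_nonneg _) (by linarith), add_sub_cancel]
  rw [mul_right_comm, mul_comm _ z, Complex.mul_conj', hexp]
  push_cast
  rfl

/-- The extremizer of Hölder's inequality is `φ = conj F * |F| ^ (q - 2)` on `S`. -/
theorem exists_integrable_extremizer {α : Type*} [MeasurableSpace α] {μ : Measure α} {p q : ℝ}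
    (hpq : p.HolderConjugate q) {F : α → ℂ} (hF : Measurable F) {K : ℝ} (hK : ∀ t, ‖F t‖ ≤ K)
    {S : Set α} (hS : MeasurableSet S) (hSfin : μ S ≠ ∞) :
    ∃ φ : α → ℂ, Measurable φ ∧ Integrable φ μ ∧
      ∫⁻ t, ‖φ t‖ₑ ^ p ∂μ = ∫⁻ t in S, ‖F t‖ₑ ^ q ∂μ ∧
      ‖∫ t, φ t * F t ∂μ‖ₑ = ∫⁻ t in S, ‖F t‖ₑ ^ q ∂μ ∧ ∫⁻ t in S, ‖F t‖ₑ ^ q ∂μ ≠ ∞ := by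
  have hp0 : 0 < p := hpq.pos
  have hq1 : 0 < q - 1 := sub_pos.2 hpq.symm.lt
  have hq : (q - 1) * p = q := hpq.symm.sub_one_mul_conj
  set φ₀ : α → ℂ := fun t => starRingEnd ℂ (F t) * ((‖F t‖ ^ (q - 2) : ℝ) : ℂ)
  have hφ₀m : Measurable φ₀ := (continuous_conj.measurable.comp hF).mul (by fun_prop)
  have hnorm (t : α) : ‖φ₀ t‖ = ‖F t‖ ^ (q - 1) :=
    norm_conj_mul_norm_rpow_sub_two hpq.symm.lt (F t)
  have hmul (t : α) : φ₀ t * F t = ((‖F t‖ ^ q : ℝ) : ℂ) :=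
    conj_mul_norm_rpow_sub_two_mul_self hpq.symm.pos (F t)
  have hint {r : ℝ} (hr : 0 ≤ r) : IntegrableOn (fun t => ‖F t‖ ^ r) S μ := by
    refine Measure.integrableOn_of_bounded (M := K ^ r) hSfin
      (hF.norm.pow_const r).aestronglyMeasurable (.of_forall fun t => ?_)
    rw [Real.norm_of_nonneg (by positivity)]
    exact Real.rpow_le_rpow (norm_nonneg _) (hK t) hr
  have hφ₀i : IntegrableOn φ₀ S μ :=
    (hint hq1.le).mono' hφ₀m.aestronglyMeasurable (.of_forall fun t => (hnorm t).le)
  have henorm (t : α) : ‖F t‖ₑ ^ q = ENNReal.ofReal (‖F t‖ ^ q) := by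
    rw [← ofReal_norm, ENNReal.ofReal_rpow_of_nonneg (norm_nonneg _) (by linarith)]
  have hset : ∫⁻ t in S, ‖F t‖ₑ ^ q ∂μ = ENNReal.ofReal (∫ t in S, ‖F t‖ ^ q ∂μ) := by
    rw [ofReal_integral_eq_lintegral_ofReal (hint (by linarith))
      (.of_forall fun t => by positivity)]
    simp only [henorm]
  refine ⟨S.indicator φ₀, hφ₀m.indicator hS, (integrable_indicator_iff hS).2 hφ₀i, ?_, ?_, ?_⟩
  · rw [← lintegral_indicator hS]
    refine lintegral_congr fun t => ?_
    by_cases ht : t ∈ S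
    · simp only [indicator_of_mem ht]
      rw [← ofReal_norm, hnorm, ENNReal.ofReal_rpow_of_nonneg (by positivity) hp0.le,
        ← Real.rpow_mul (norm_nonneg _), hq, henorm]
    · simp [ht, hp0]
  · simp only [← indicator_mul_left, hmul]
    rw [integral_indicator hS, integral_complex_ofReal, ← ofReal_norm, norm_real,
      Real.norm_of_nonneg (by positivity), hset]
  · exact hset ▸ ENNReal.ofReal_ne_top

theorem le_rpow_of_le_mul_rpow_mul_rpow_half {γ : ℝ} (hγ : 0 < γ) {A B D : ℝ≥0∞} (hA : A ≠ ∞)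
    (h : A ≤ (D * A ^ (2 - γ)) ^ (1 / 2 : ℝ) * B ^ (1 / 2 : ℝ)) : A ≤ (D * B) ^ (1 / γ) := by
  rcases eq_or_ne A 0 with rfl | h0
  · exact zero_le
  rw [← ENNReal.mul_rpow_of_nonneg _ _ (by positivity), one_div,
    ENNReal.le_rpow_inv_iff two_pos, show (2 : ℝ) = γ + (2 - γ) by ring,
    ENNReal.rpow_add _ _ h0 hA, add_sub_cancel, mul_right_comm] at h
  rw [one_div, ENNReal.le_rpow_inv_iff hγ]
  exact (ENNReal.mul_le_mul_iff_left (ENNReal.rpow_pos h0.bot_lt hA).ne'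
    (ENNReal.rpow_ne_top_of_ne_zero h0 hA)).1 h

theorem norm_integral_mul_le_of_norm_le {α : Type*} [MeasurableSpace α] {μ : Measure α}
    {f e : α → ℂ} {K : ℝ} (he : ∀ t, ‖e t‖ ≤ K) (hf : Integrable f μ) :
    ‖∫ t, e t * f t ∂μ‖ ≤ K * ∫ t, ‖f t‖ ∂μ := by
  rw [← integral_const_mul]
  refine norm_integral_le_of_norm_le (hf.norm.const_mul K) (.of_forall fun t => ?_)
  rw [norm_mul]
  gcongr
  exact he t

section AdjointMethod

variable {Ω : Type*} [MeasurableSpace Ω] {μ : Measure Ω} [IsFiniteMeasure μ] {e : ℝ → Ω → ℂ}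
  {φ : ℝ → ℂ} {g : Ω → ℂ} {γ K : ℝ} {C : ℝ≥0∞}

theorem integral_norm_sq_integral_mul_eq (he : Measurable (Function.uncurry e))
    (heK : ∀ t ω, ‖e t ω‖ ≤ K) (hφ : Integrable φ) :
    ((∫ ω, ‖∫ t, φ t * e t ω‖ ^ 2 ∂μ : ℝ) : ℂ) =
      ∫ z : ℝ × ℝ, φ z.1 * starRingEnd ℂ (φ z.2) *
        ∫ ω, e z.1 ω * starRingEnd ℂ (e z.2 ω) ∂μ := by
  have hsq (ω : Ω) : ((‖∫ t, φ t * e t ω‖ ^ 2 : ℝ) : ℂ) =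
      ∫ z : ℝ × ℝ, φ z.1 * starRingEnd ℂ (φ z.2) * (e z.1 ω * starRingEnd ℂ (e z.2 ω)) := by
    rw [ofReal_pow, ← Complex.mul_conj', ← integral_conj]
    simp only [map_mul]
    rw [← integral_prod_mul]
    exact integral_congr_ae (.of_forall fun z => by ring)
  have hint : Integrable (Function.uncurry fun (ω : Ω) (z : ℝ × ℝ) =>
      φ z.1 * starRingEnd ℂ (φ z.2) * (e z.1 ω * starRingEnd ℂ (e z.2 ω)))
      (μ.prod volume) := by
    have hφφ : Integrable fun z : ℝ × ℝ => φ z.1 * starRingEnd ℂ (φ z.2) :=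
      hφ.mul_prod (conjCLE.integrable_comp_iff.2 hφ)
    have hbound (w : Ω × ℝ × ℝ) : ‖e w.2.1 w.1 * starRingEnd ℂ (e w.2.2 w.1)‖ ≤ K * K := by
      rw [norm_mul, norm_conj]
      exact mul_le_mul (heK _ _) (heK _ _) (norm_nonneg _)
        ((norm_nonneg _).trans (heK w.2.1 w.1))
    refine (hφφ.comp_snd μ).mul_bdd ?_ (.of_forall hbound)
    have hconj : Measurable (starRingEnd ℂ) := continuous_conj.measurable
    exact ((he.comp (by fun_prop : Measurable fun w : Ω × ℝ × ℝ => (w.2.1, w.1))).mul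
      (hconj.comp (he.comp (by fun_prop : Measurable fun w : Ω × ℝ × ℝ =>
        (w.2.2, w.1))))).aestronglyMeasurable
  rw [← integral_complex_ofReal]
  simp only [hsq]
  rw [integral_integral_swap hint]
  simp only [integral_const_mul]

theorem measurable_integral_mul (he : Measurable (Function.uncurry e)) (hφ : Measurable φ) :
    Measurable fun ω => ∫ t, φ t * e t ω := by
  have h : Measurable fun z : Ω × ℝ => φ z.2 * e z.2 z.1 :=
    (hφ.comp measurable_snd).mul (he.comp measurable_swap)
  exact h.stronglyMeasurable.integral_prod_right'.measurable

theorem lintegral_enorm_sq_integral_mul_le (he : Measurable (Function.uncurry e))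
    (heK : ∀ t ω, ‖e t ω‖ ≤ K) (hφ : Integrable φ) (hφm : Measurable φ)
    (hK : ∀ t s, s ≠ t → ‖∫ ω, e t ω * starRingEnd ℂ (e s ω) ∂μ‖ₑ ≤
      C * ENNReal.ofReal (|t - s| ^ (-γ))) :
    ∫⁻ ω, ‖∫ t, φ t * e t ω‖ₑ ^ (2 : ℝ) ∂μ ≤
      ∫⁻ t, ∫⁻ s, C * (‖φ t‖ₑ * ‖φ s‖ₑ * ENNReal.ofReal (|t - s| ^ (-γ))) := by
  have hint : Integrable (fun ω => ‖∫ t, φ t * e t ω‖ ^ 2) μ := by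
    refine .of_bound ((measurable_integral_mul he hφm).norm.pow_const 2).aestronglyMeasurable
      ((K * ∫ t, ‖φ t‖) ^ 2) (.of_forall fun ω => ?_)
    rw [norm_pow, norm_norm]
    gcongr
    simpa only [mul_comm] using norm_integral_mul_le_of_norm_le (fun t => heK t ω) hφ
  calc ∫⁻ ω, ‖∫ t, φ t * e t ω‖ₑ ^ (2 : ℝ) ∂μ
      = ENNReal.ofReal (∫ ω, ‖∫ t, φ t * e t ω‖ ^ 2 ∂μ) := by
        rw [ofReal_integral_eq_lintegral_ofReal hint (.of_forall fun ω => by positivity)]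
        simp only [ENNReal.rpow_two, ENNReal.ofReal_pow (norm_nonneg _), ofReal_norm]
    _ = ‖∫ z : ℝ × ℝ, φ z.1 * starRingEnd ℂ (φ z.2) *
          ∫ ω, e z.1 ω * starRingEnd ℂ (e z.2 ω) ∂μ‖ₑ := by
        rw [← integral_norm_sq_integral_mul_eq he heK hφ, ← ofReal_norm, norm_real,
          Real.norm_of_nonneg (by positivity)]
    _ ≤ ∫⁻ t, ∫⁻ s,
          ‖φ t * starRingEnd ℂ (φ s) * ∫ ω, e t ω * starRingEnd ℂ (e s ω) ∂μ‖ₑ :=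
        (enorm_integral_le_lintegral_enorm _).trans (lintegral_prod_le _)
    _ ≤ ∫⁻ t, ∫⁻ s, C * (‖φ t‖ₑ * ‖φ s‖ₑ * ENNReal.ofReal (|t - s| ^ (-γ))) := by
        refine lintegral_mono fun t => lintegral_mono_ae ?_
        filter_upwards [Measure.ae_ne volume t] with s hs
        rw [enorm_mul, enorm_mul, RCLike.enorm_conj, mul_left_comm]
        gcongr
        exact hK t s hs

theorem integral_mul_integral_swap (he : Measurable (Function.uncurry e))
    (heK : ∀ t ω, ‖e t ω‖ ≤ K) (hφ : Integrable φ) (hg : Integrable g μ) :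
    ∫ t, φ t * ∫ ω, e t ω * g ω ∂μ = ∫ ω, (∫ t, φ t * e t ω) * g ω ∂μ := by
  have hint : Integrable (Function.uncurry fun (t : ℝ) (ω : Ω) => φ t * (e t ω * g ω))
      (volume.prod μ) := by
    refine ((hφ.mul_prod hg).mul_bdd he.aestronglyMeasurable
      (.of_forall fun z => heK z.1 z.2)).congr (.of_forall fun z => ?_)
    simp only [Function.uncurry]
    ring
  simp only [← integral_const_mul, ← integral_mul_const]
  rw [integral_integral_swap hint]
  simp only [mul_assoc]

theorem enorm_integral_mul_integral_le (he : Measurable (Function.uncurry e))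
    (heK : ∀ t ω, ‖e t ω‖ ≤ K) (hγ0 : 0 < γ) (hγ1 : γ < 1) (hC : C ≠ ∞)
    (hK : ∀ t s, s ≠ t → ‖∫ ω, e t ω * starRingEnd ℂ (e s ω) ∂μ‖ₑ ≤
      C * ENNReal.ofReal (|t - s| ^ (-γ)))
    (hφ : Integrable φ) (hφm : Measurable φ) (hg : Integrable g μ) :
    ‖∫ t, φ t * ∫ ω, e t ω * g ω ∂μ‖ₑ ≤
      ((C * ENNReal.ofReal (4 / (1 - γ) + 4)) * (∫⁻ t, ‖φ t‖ₑ ^ (2 / (2 - γ))) ^ (2 - γ))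
          ^ (1 / 2 : ℝ) *
        (∫⁻ ω, ‖g ω‖ₑ ^ (2 : ℝ) ∂μ) ^ (1 / 2 : ℝ) := by
  rw [integral_mul_integral_swap he heK hφ hg]
  refine (enorm_integral_le_lintegral_enorm _).trans ?_
  simp only [enorm_mul]
  refine (ENNReal.lintegral_mul_le_Lp_mul_Lq μ Real.HolderConjugate.two_two
    (measurable_integral_mul he hφm).enorm.aemeasurable hg.aestronglyMeasurable.enorm).trans ?_
  gcongr
  refine (lintegral_enorm_sq_integral_mul_le he heK hφ hφm hK).trans ?_
  simp only [lintegral_const_mul' _ _ hC, mul_assoc C]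
  gcongr
  exact hardy_littlewood_sobolev hγ0 hγ1 hφm.enorm

theorem lintegral_enorm_integral_mul_rpow_le (he : Measurable (Function.uncurry e))
    (heK : ∀ t ω, ‖e t ω‖ ≤ K) (hγ0 : 0 < γ) (hγ1 : γ < 1) (hC : C ≠ ∞)
    (hK : ∀ t s, s ≠ t → ‖∫ ω, e t ω * starRingEnd ℂ (e s ω) ∂μ‖ₑ ≤
      C * ENNReal.ofReal (|t - s| ^ (-γ)))
    (hg : Integrable g μ) (hgm : Measurable g) :
    ∫⁻ t, ‖∫ ω, e t ω * g ω ∂μ‖ₑ ^ (2 / γ) ≤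
      (C * ENNReal.ofReal (4 / (1 - γ) + 4) * ∫⁻ ω, ‖g ω‖ₑ ^ (2 : ℝ) ∂μ) ^ (1 / γ) := by
  set F : ℝ → ℂ := fun t => ∫ ω, e t ω * g ω ∂μ
  have hFm : Measurable F :=
    (he.mul (hgm.comp measurable_snd)).stronglyMeasurable.integral_prod_right.measurable
  have hFbdd (t : ℝ) : ‖F t‖ ≤ K * ∫ ω, ‖g ω‖ ∂μ := norm_integral_mul_le_of_norm_le (heK t) hg
  refine lintegral_le_of_forall_fin_meas_le _ fun S hS hSfin => ?_
  obtain ⟨φ, hφm, hφi, hφp, hpair, hfin⟩ :=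
    exists_integrable_extremizer (μ := volume)
      (holderConjugate_two_div hγ0 (by linarith)) hFm hFbdd hS hSfin
  have hA := enorm_integral_mul_integral_le he heK hγ0 hγ1 hC hK hφi hφm hg
  rw [hpair, hφp] at hA
  exact le_rpow_of_le_mul_rpow_mul_rpow_half hγ0 hfin hA

end AdjointMethod

/-! ### Plancherel's theorem on `L¹ ∩ L²` -/

theorem lintegral_enorm_rpow_two_eq {α E : Type*} [MeasurableSpace α] [NormedAddCommGroup E]
    (μ : Measure α) (f : α → E) : ∫⁻ x, ‖f x‖ₑ ^ (2 : ℝ) ∂μ = eLpNorm f 2 μ ^ (2 : ℝ) := by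
  rw [eLpNorm_eq_lintegral_rpow_enorm_toReal two_ne_zero ENNReal.ofNat_ne_top,
    ← ENNReal.rpow_mul]
  norm_num

theorem lintegral_enorm_rpow_two_eq_top {α E : Type*} [MeasurableSpace α] [NormedAddCommGroup E]
    {μ : Measure α} {f : α → E} (hf : AEStronglyMeasurable f μ) (hf₂ : ¬MemLp f 2 μ) :
    ∫⁻ x, ‖f x‖ₑ ^ (2 : ℝ) ∂μ = ∞ := by
  rw [lintegral_enorm_rpow_two_eq, not_lt_top_iff.1 fun h => hf₂ ⟨hf, h⟩,
    ENNReal.top_rpow_of_pos two_pos]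

theorem memLp_two_of_integrable_of_norm_le {α E : Type*} [MeasurableSpace α]
    [NormedAddCommGroup E] {μ : Measure α} {f : α → E} (hf : Integrable f μ) {C : ℝ}
    (hC : ∀ x, ‖f x‖ ≤ C) : MemLp f 2 μ := by
  rw [memLp_two_iff_integrable_sq_norm hf.aestronglyMeasurable]
  refine (hf.norm.const_mul C).mono' (hf.aestronglyMeasurable.norm.pow 2) (.of_forall fun x => ?_)
  rw [Real.norm_of_nonneg (by positivity), sq]
  exact mul_le_mul_of_nonneg_right (hC x) (norm_nonneg _)

theorem lintegral_comp_mul_left {c : ℝ} (hc : c ≠ 0) (f : ℝ → ℝ≥0∞) :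
    ∫⁻ x, f (c * x) = ENNReal.ofReal |c⁻¹| * ∫⁻ x, f x := by
  rw [← (measurableEmbedding_mulLeft₀ hc).lintegral_map, Real.map_volume_mul_left hc,
    lintegral_smul_measure, smul_eq_mul]

section Plancherel

open FourierTransform SchwartzMap

variable {V F : Type*} [NormedAddCommGroup V] [InnerProductSpace ℝ V] [FiniteDimensional ℝ V]
  [MeasurableSpace V] [BorelSpace V] [NormedAddCommGroup F] [InnerProductSpace ℂ F]
  {f : V → F}

theorem continuous_fourier (hf : Integrable f) : Continuous (𝓕 f) :=
  VectorFourier.fourierIntegral_continuous Real.continuous_fourierChar continuous_inner hf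

variable [CompleteSpace F]

theorem coeFn_fourier_toLp_ae_eq (hf₁ : Integrable f) (hf₂ : MemLp f 2) :
    (𝓕 (hf₂.toLp f) : Lp F 2) =ᵐ[volume] 𝓕 f := by
  refine ae_eq_of_integral_contDiff_smul_eq ((Lp.memLp _).locallyIntegrable (by norm_num))
    (continuous_fourier hf₁).locallyIntegrable fun g hg hgs => ?_
  have hg' := hgs.comp_left (g := ((↑) : ℝ → ℂ)) ofReal_zero
  set G : 𝓢(V, ℂ) := hg'.toSchwartzMap (ofRealCLM.contDiff.comp hg)
  have hdist := DFunLike.congr_fun (Lp.fourier_toTemperedDistribution_eq (hf₂.toLp f)) G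
  simp only [TemperedDistribution.fourier_apply, Lp.toTemperedDistribution_apply] at hdist
  calc ∫ x, g x • (𝓕 (hf₂.toLp f) : Lp F 2 (volume : Measure V)) x =
        ∫ x, (𝓕 G : 𝓢(V, ℂ)) x • hf₂.toLp f x := hdist.symm
    _ = ∫ x, 𝓕 (G : V → ℂ) x • f x := by
      rw [fourier_coe]
      exact integral_congr_ae (hf₂.coeFn_toLp.mono fun x hx => congrArg _ hx)
    _ = ∫ x, G x • 𝓕 f x := by
      simpa only [flip_innerₗ] using! VectorFourier.integral_fourierIntegral_smul_eq_flip
        (L := innerₗ V) Real.continuous_fourierChar continuous_inner G.integrable hf₁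
    _ = ∫ x, g x • 𝓕 f x := rfl

theorem eLpNorm_fourier_eq (hf₁ : Integrable f) (hf₂ : MemLp f 2) :
    eLpNorm (𝓕 f) 2 = eLpNorm f 2 := by
  rw [← eLpNorm_congr_ae (coeFn_fourier_toLp_ae_eq hf₁ hf₂), ← Lp.enorm_def,
    ← ofReal_norm, Lp.norm_fourier_eq, ofReal_norm, Lp.enorm_toLp]

theorem memLp_fourier (hf₁ : Integrable f) (hf₂ : MemLp f 2) : MemLp (𝓕 f) 2 :=
  ⟨(continuous_fourier hf₁).aestronglyMeasurable, (eLpNorm_fourier_eq hf₁ hf₂).trans_lt hf₂.2⟩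

theorem lintegral_enorm_fourier_sq_le (hf : Integrable f) :
    ∫⁻ x, ‖𝓕 f x‖ₑ ^ (2 : ℝ) ≤ ∫⁻ x, ‖f x‖ₑ ^ (2 : ℝ) := by
  by_cases hf₂ : MemLp f 2
  · rw [lintegral_enorm_rpow_two_eq, lintegral_enorm_rpow_two_eq, eLpNorm_fourier_eq hf hf₂]
  · rw [lintegral_enorm_rpow_two_eq_top hf.aestronglyMeasurable hf₂]
    exact le_top

/-- `𝓕 f` is the product of `(1 + w²)^(-1/2)` and the square integrable function
`(1 + w²)^(1/2) 𝓕 f`. -/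
theorem integrable_fourier_of_memLp_deriv {f : ℝ → F} (hf : Differentiable ℝ f)
    (hf₁ : Integrable f) (hf₂ : MemLp f 2) (hf'₁ : Integrable (deriv f))
    (hf'₂ : MemLp (deriv f) 2) : Integrable (𝓕 f) := by
  have hderiv (w : ℝ) : ‖𝓕 (deriv f) w‖ = 2 * Real.pi * |w| * ‖𝓕 f w‖ := by
    rw [Real.fourier_deriv hf₁ hf hf'₁]
    simp [norm_smul, abs_of_pos Real.pi_pos]
  refine ((integrable_inv_one_add_sq.add (memLp_fourier hf₁ hf₂).norm.integrable_sq).add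
    (memLp_fourier hf'₁ hf'₂).norm.integrable_sq).mono'
      (continuous_fourier hf₁).aestronglyMeasurable (.of_forall fun w => ?_)
  have hweight : w ^ 2 * ‖𝓕 f w‖ ^ 2 ≤ ‖𝓕 (deriv f) w‖ ^ 2 := by
    rw [hderiv, ← sq_abs w, ← mul_pow]
    gcongr
    exact le_mul_of_one_le_left (abs_nonneg w) (by linarith [Real.pi_gt_three])
  have hamgm : ‖𝓕 f w‖ ≤ (1 + w ^ 2)⁻¹ + (1 + w ^ 2) * ‖𝓕 f w‖ ^ 2 := by
    have hc : (1 + w ^ 2)⁻¹ * (1 + w ^ 2) = 1 := inv_mul_cancel₀ (by positivity)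
    have hinv : 0 < (1 + w ^ 2)⁻¹ := by positivity
    nlinarith [mul_nonneg hinv.le (sq_nonneg ((1 + w ^ 2) * ‖𝓕 f w‖ - 1)), norm_nonneg (𝓕 f w)]
  calc ‖𝓕 f w‖ ≤ (1 + w ^ 2)⁻¹ + (1 + w ^ 2) * ‖𝓕 f w‖ ^ 2 := hamgm
    _ = (1 + w ^ 2)⁻¹ + ‖𝓕 f w‖ ^ 2 + w ^ 2 * ‖𝓕 f w‖ ^ 2 := by ring
    _ ≤ (1 + w ^ 2)⁻¹ + ‖𝓕 f w‖ ^ 2 + ‖𝓕 (deriv f) w‖ ^ 2 := by gcongr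

end Plancherel

/-! ### The free evolution and the endpoint maximal estimate -/

section Selection

/-- A measurable choice, for each parameter `t`, of one of the points `r 0, …, r N` at which `F t`
is largest. -/
def argmaxUpTo {α X : Type*} (F : α → X → ℝ≥0∞) (r : ℕ → X) : ℕ → α → X
  | 0, _ => r 0
  | N + 1, t =>
    if F t (argmaxUpTo F r N t) < F t (r (N + 1)) then r (N + 1) else argmaxUpTo F r N t

variable {α X : Type*}

theorem apply_argmaxUpTo_succ (F : α → X → ℝ≥0∞) (r : ℕ → X) (N : ℕ) (t : α) :
    F t (argmaxUpTo F r (N + 1) t) = F t (argmaxUpTo F r N t) ⊔ F t (r (N + 1)) := by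
  rw [argmaxUpTo]
  split_ifs with hlt
  · exact (sup_of_le_right hlt.le).symm
  · exact (sup_of_le_left (not_lt.1 hlt)).symm

theorem le_apply_argmaxUpTo (F : α → X → ℝ≥0∞) (r : ℕ → X) (N : ℕ) (t : α) :
    F t (r N) ≤ F t (argmaxUpTo F r N t) := by
  cases N with
  | zero => exact le_rfl
  | succ N => exact le_sup_right.trans (apply_argmaxUpTo_succ F r N t).ge

variable [MeasurableSpace α] [MeasurableSpace X] {F : α → X → ℝ≥0∞}

theorem measurable_argmaxUpTo (hF : Measurable (Function.uncurry F)) (r : ℕ → X) (N : ℕ) :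
    Measurable (argmaxUpTo F r N) := by
  induction N with
  | zero => exact measurable_const
  | succ N ih =>
    exact .ite (measurableSet_lt (hF.comp (measurable_id.prodMk ih))
      (hF.comp (measurable_id.prodMk measurable_const))) measurable_const ih

theorem lintegral_iSup_rpow_le (μ : Measure α) (hF : Measurable (Function.uncurry F)) (r : ℕ → X)
    {q : ℝ} (hq : 0 < q) :
    ∫⁻ t, (⨆ k, F t (r k)) ^ q ∂μ ≤ ⨆ N, ∫⁻ t, F t (argmaxUpTo F r N t) ^ q ∂μ := by
  have hsel (N : ℕ) : Measurable fun t => F t (argmaxUpTo F r N t) :=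
    hF.comp (measurable_id.prodMk (measurable_argmaxUpTo hF r N))
  rw [← lintegral_iSup (fun N => (hsel N).pow_const q) (monotone_nat_of_le_succ fun N t =>
    ENNReal.rpow_le_rpow (le_sup_left.trans (apply_argmaxUpTo_succ F r N t).ge) hq.le)]
  refine lintegral_mono fun t => ?_
  refine (ENNReal.rpow_le_rpow (iSup_mono fun N => le_apply_argmaxUpTo F r N t) hq.le).trans ?_
  exact ((ENNReal.orderIsoRpow q hq).map_iSup _).le

end Selection

section Evolution

/-- The plane wave `e^{i(tω(ξ) - xξ)}` solving the linear equation, as a function of its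
frequency `ξ`. -/
def planeWave (a t x ξ : ℝ) : ℂ := exp (I * ((t * disp a ξ - x * ξ : ℝ) : ℂ))

/-- The superposition of plane waves with frequency profile `g`. For `g = û₀` this is
`2π W(t)u₀(x)`. -/
def evolution (a : ℝ) (g : ℝ → ℂ) (t x : ℝ) : ℂ := ∫ ξ, planeWave a t x ξ * g ξ

/-- The multiplier `D^σ` acting on frequency profiles. -/
def weighted (σ : ℝ) (g : ℝ → ℂ) (ξ : ℝ) : ℂ := ((|ξ| ^ σ : ℝ) : ℂ) * g ξ

variable {a β σ : ℝ} {g h : ℝ → ℂ} {t x : ℝ}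

theorem norm_planeWave (a t x ξ : ℝ) : ‖planeWave a t x ξ‖ = 1 := norm_exp_I_mul_ofReal _

theorem planeWave_mul_conj (a t s x y ξ : ℝ) :
    planeWave a t x ξ * starRingEnd ℂ (planeWave a s y ξ) = planeWave a (t - s) (x - y) ξ := by
  simp only [planeWave, ← exp_conj, ← exp_add, map_mul, conj_I, conj_ofReal]
  congr 1
  push_cast
  ring

theorem measurable_disp (a : ℝ) : Measurable (disp a) := by
  unfold disp
  fun_prop

theorem measurable_planeWave (a : ℝ) {α : Type*} [MeasurableSpace α] {t x ξ : α → ℝ}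
    (ht : Measurable t) (hx : Measurable x) (hξ : Measurable ξ) :
    Measurable fun w => planeWave a (t w) (x w) (ξ w) := by
  have := (measurable_disp a).comp hξ
  unfold planeWave
  fun_prop

theorem continuous_planeWave (a t ξ : ℝ) : Continuous fun x => planeWave a t x ξ := by
  unfold planeWave
  fun_prop

theorem measurable_weighted (σ : ℝ) (hg : Measurable g) : Measurable (weighted σ g) := by
  unfold weighted
  fun_prop

theorem measurable_evolution (a : ℝ) {α : Type*} [MeasurableSpace α] {g : α → ℝ → ℂ}
    (hg : Measurable (Function.uncurry g)) {t x : α → ℝ} (ht : Measurable t) (hx : Measurable x) :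
    Measurable fun w => evolution a (g w) (t w) (x w) :=
  ((measurable_planeWave a (ht.comp measurable_fst) (hx.comp measurable_fst)
    measurable_snd).mul hg).stronglyMeasurable.integral_prod_right.measurable

theorem aestronglyMeasurable_planeWave_mul (a t x : ℝ) (hg : Integrable g) :
    AEStronglyMeasurable fun ξ => planeWave a t x ξ * g ξ :=
  (measurable_planeWave a measurable_const measurable_const
    measurable_id).aestronglyMeasurable.mul hg.aestronglyMeasurable

theorem norm_planeWave_mul (a t x ξ : ℝ) (z : ℂ) : ‖planeWave a t x ξ * z‖ = ‖z‖ := by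
  rw [norm_mul, norm_planeWave, one_mul]

theorem integrable_planeWave_mul (a t x : ℝ) (hg : Integrable g) :
    Integrable fun ξ => planeWave a t x ξ * g ξ :=
  hg.mono (aestronglyMeasurable_planeWave_mul a t x hg)
    (.of_forall fun ξ => (norm_planeWave_mul a t x ξ (g ξ)).le)

theorem continuous_evolution (a : ℝ) (hg : Integrable g) (t : ℝ) :
    Continuous (evolution a g t) :=
  continuous_of_dominated (fun x => aestronglyMeasurable_planeWave_mul a t x hg)
    (fun x => .of_forall fun ξ => (norm_planeWave_mul a t x ξ (g ξ)).le) hg.norm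
    (.of_forall fun ξ => (continuous_planeWave a t ξ).mul continuous_const)

theorem enorm_integral_weight_mul_conj_le (hβ0 : 0 ≤ β) (hβ : β ≤ a / 2) {s : ℝ} (hst : s ≠ t)
    (y : ℝ) {N : ℝ} (hN : 0 ≤ N) :
    ‖∫ ξ in Ioc (-N) N, (((|ξ| ^ (β / 2) : ℝ) : ℂ) * planeWave a t x ξ) *
        starRingEnd ℂ (((|ξ| ^ (β / 2) : ℝ) : ℂ) * planeWave a s y ξ)‖ₑ ≤
      20 * ENNReal.ofReal (|t - s| ^ (-((β + 1) / (2 + a)))) := by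
  have hkernel (ξ : ℝ) : (((|ξ| ^ (β / 2) : ℝ) : ℂ) * planeWave a t x ξ) *
      starRingEnd ℂ (((|ξ| ^ (β / 2) : ℝ) : ℂ) * planeWave a s y ξ) =
        ((|ξ| ^ β : ℝ) : ℂ) * planeWave a (t - s) (x - y) ξ := by
    rw [map_mul, conj_ofReal, mul_mul_mul_comm, planeWave_mul_conj, ← ofReal_mul,
      ← Real.rpow_add_of_nonneg (abs_nonneg ξ) (by positivity) (by positivity), add_halves]
  simp_rw [hkernel]
  rw [← intervalIntegral.integral_of_le (by linarith), ← ofReal_norm, ← ENNReal.ofReal_ofNat,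
    ← ENNReal.ofReal_mul (by norm_num)]
  exact ENNReal.ofReal_le_ofReal
    (norm_dispersiveKernel_le hβ0 hβ (sub_ne_zero.2 hst.symm) (x - y) hN)

theorem norm_indicator_abs_rpow_le (hσ : 0 ≤ σ) {N : ℝ} (hN : 0 ≤ N) (ξ : ℝ) :
    ‖(Ioc (-N) N).indicator (fun ξ => ((|ξ| ^ σ : ℝ) : ℂ)) ξ‖ ≤ N ^ σ := by
  by_cases hξ : ξ ∈ Ioc (-N) N
  · rw [indicator_of_mem hξ, norm_real, Real.norm_of_nonneg (by positivity)]
    exact Real.rpow_le_rpow (abs_nonneg ξ) (abs_le.2 ⟨hξ.1.le, hξ.2⟩) hσ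
  · rw [indicator_of_notMem hξ, norm_zero]
    positivity

/-- Along a curve the kernel of `T T*` is the dispersive kernel, whose decay does not depend on
the curve. -/
theorem lintegral_evolution_truncated_curve_le (hβ0 : 0 ≤ β) (hβ : β ≤ a / 2) (hh : Measurable h)
    (hh2 : MemLp h 2) {x : ℝ → ℝ} (hx : Measurable x) {N : ℝ} (hN : 0 ≤ N) :
    ∫⁻ t, ‖∫ ξ in Ioc (-N) N, planeWave a t (x t) ξ * weighted (β / 2) h ξ‖ₑ ^
        (2 * (2 + a) / (β + 1)) ≤
      (240 * ∫⁻ ξ, ‖h ξ‖ₑ ^ (2 : ℝ)) ^ ((2 + a) / (β + 1)) := by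
  set γ := (β + 1) / (2 + a) with hγ
  have hγ0 : 0 < γ := div_pos (by linarith) (by linarith)
  have hγ1 : γ ≤ 1 / 2 := by rw [hγ, div_le_iff₀ (by linarith)]; linarith
  have hexp : 2 * (2 + a) / (β + 1) = 2 / γ := by rw [hγ]; field_simp
  have hexp' : (2 + a) / (β + 1) = 1 / γ := by rw [hγ]; field_simp
  have hconst : ENNReal.ofReal (4 / (1 - γ) + 4) ≤ 12 := by
    rw [← ENNReal.ofReal_ofNat 12]
    refine ENNReal.ofReal_le_ofReal ?_
    rw [← le_sub_iff_add_le, div_le_iff₀ (by linarith)]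
    linarith
  set w : ℝ → ℂ := (Ioc (-N) N).indicator fun ξ => ((|ξ| ^ (β / 2) : ℝ) : ℂ)
  have hw (ξ) (hξ : ξ ∈ Ioc (-N) N) : w ξ = ((|ξ| ^ (β / 2) : ℝ) : ℂ) := indicator_of_mem hξ _
  have hwm : Measurable w := Measurable.indicator (by fun_prop) measurableSet_Ioc
  have hbound (t ξ : ℝ) : ‖w ξ * planeWave a t (x t) ξ‖ ≤ N ^ (β / 2) := by
    rw [norm_mul, norm_planeWave, mul_one]
    exact norm_indicator_abs_rpow_le (by positivity) hN ξ
  have hmain := lintegral_enorm_integral_mul_rpow_le (μ := volume.restrict (Ioc (-N) N))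
    (e := fun t ξ => w ξ * planeWave a t (x t) ξ) (K := N ^ (β / 2)) (C := 20)
    ((hwm.comp measurable_snd).mul
      (measurable_planeWave a measurable_fst (hx.comp measurable_fst) measurable_snd))
    hbound hγ0 (by linarith) (by simp) (fun t s hst => ?_)
    ((hh2.restrict _).integrable one_le_two) hh
  · rw [hexp, hexp']
    calc _ = ∫⁻ t, ‖∫ ξ in Ioc (-N) N, w ξ * planeWave a t (x t) ξ * h ξ‖ₑ ^ (2 / γ) := by
          refine lintegral_congr fun t => ?_
          rw [setIntegral_congr_fun measurableSet_Ioc fun ξ hξ => ?_]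
          simp only [weighted, hw ξ hξ]
          ring
      _ ≤ _ := hmain
      _ ≤ (20 * 12 * ∫⁻ ξ, ‖h ξ‖ₑ ^ (2 : ℝ)) ^ (1 / γ) := by
          gcongr
          exact Measure.restrict_le_self
      _ = _ := by norm_num
  · rw [setIntegral_congr_fun measurableSet_Ioc fun ξ hξ => by rw [hw ξ hξ]]
    exact enorm_integral_weight_mul_conj_le hβ0 hβ hst _ hN

theorem lintegral_evolution_curve_le (hβ0 : 0 ≤ β) (hβ : β ≤ a / 2) (hh : Measurable h)
    (hi : Integrable (weighted (β / 2) h)) {x : ℝ → ℝ} (hx : Measurable x) :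
    ∫⁻ t, ‖evolution a (weighted (β / 2) h) t (x t)‖ₑ ^ (2 * (2 + a) / (β + 1)) ≤
      (240 * ∫⁻ ξ, ‖h ξ‖ₑ ^ (2 : ℝ)) ^ ((2 + a) / (β + 1)) := by
  by_cases hh2 : MemLp h 2
  swap
  · rw [lintegral_enorm_rpow_two_eq_top hh.aestronglyMeasurable hh2, ENNReal.mul_top (by norm_num),
      ENNReal.top_rpow_of_pos (div_pos (by linarith) (by linarith))]
    exact le_top
  have hlim (t : ℝ) : Filter.Tendsto
      (fun n : ℕ => ∫ ξ in Ioc (-(n : ℝ)) n, planeWave a t (x t) ξ * weighted (β / 2) h ξ)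
      Filter.atTop (nhds (evolution a (weighted (β / 2) h) t (x t))) :=
    (aecover_Ioc (Filter.tendsto_neg_atTop_atBot.comp tendsto_natCast_atTop_atTop)
      tendsto_natCast_atTop_atTop).integral_tendsto_of_countably_generated
        (integrable_planeWave_mul a t (x t) hi)
  calc _ = ∫⁻ t, Filter.liminf (fun n : ℕ => ‖∫ ξ in Ioc (-(n : ℝ)) n,
        planeWave a t (x t) ξ * weighted (β / 2) h ξ‖ₑ ^ (2 * (2 + a) / (β + 1))) Filter.atTop :=
        lintegral_congr fun t =>
          ((ENNReal.continuous_rpow_const.tendsto _).comp (hlim t).enorm).liminf_eq.symm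
    _ ≤ _ := lintegral_liminf_le fun n =>
      ((measurable_planeWave a measurable_fst (hx.comp measurable_fst) measurable_snd).mul
        ((measurable_weighted _ hh).comp measurable_snd)).stronglyMeasurable.integral_prod_right
          |>.measurable.enorm.pow_const _
    _ ≤ _ := Filter.liminf_le_of_le (by isBoundedDefault) fun b hb => by
      obtain ⟨n, hn⟩ := hb.exists
      exact hn.trans (lintegral_evolution_truncated_curve_le hβ0 hβ hh hh2 hx n.cast_nonneg)

/-- The maximal function `sup_x |evolution a g t x|`. The supremum runs over a dense sequence so
that measurability in `t` is immediate; for integrable `g` it still bounds every `x`. -/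
def maxEvolution (a : ℝ) (g : ℝ → ℂ) (t : ℝ) : ℝ≥0∞ :=
  ⨆ k, ‖evolution a g t (TopologicalSpace.denseSeq ℝ k)‖ₑ

theorem enorm_evolution_le_maxEvolution (a : ℝ) (hg : Integrable g) (t x : ℝ) :
    ‖evolution a g t x‖ₑ ≤ maxEvolution a g t := by
  have hclosed : IsClosed {y | ‖evolution a g t y‖ₑ ≤ maxEvolution a g t} :=
    isClosed_le (continuous_evolution a hg t).enorm continuous_const
  exact hclosed.closure_subset_iff.2 (range_subset_iff.2 fun k => le_iSup
    (fun k => ‖evolution a g t (TopologicalSpace.denseSeq ℝ k)‖ₑ) k)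
    ((TopologicalSpace.denseRange_denseSeq ℝ).closure_range ▸ mem_univ x)

/-- The endpoint `θ = 1` of the estimate. A curve through the maximisers over finitely many
points reduces the maximal function to evolutions along curves. -/
theorem lintegral_maxEvolution_rpow_le (hβ0 : 0 ≤ β) (hβ : β ≤ a / 2) (hh : Measurable h)
    (hi : Integrable (weighted (β / 2) h)) :
    ∫⁻ t, maxEvolution a (weighted (β / 2) h) t ^ (2 * (2 + a) / (β + 1)) ≤
      (240 * ∫⁻ ξ, ‖h ξ‖ₑ ^ (2 : ℝ)) ^ ((2 + a) / (β + 1)) := by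
  have hF : Measurable (Function.uncurry fun t x => ‖evolution a (weighted (β / 2) h) t x‖ₑ) :=
    (measurable_evolution a (g := fun _ : ℝ × ℝ => weighted (β / 2) h)
      ((measurable_weighted (β / 2) hh).comp measurable_snd) measurable_fst measurable_snd).enorm
  exact (lintegral_iSup_rpow_le volume hF _ (div_pos (by linarith) (by linarith))).trans
    (iSup_le fun N => lintegral_evolution_curve_le hβ0 hβ hh hi (measurable_argmaxUpTo hF _ N))

end Evolution

/-! ### Interpolation by averaging over imaginary powers -/

section Interpolation

open FourierTransform

variable {θ : ℝ}

/-- The function `1 / (e^(-θv) + e^((1-θ)v))`, which splits `e^(θv)` into `interpFun θ v` and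
`e^v * interpFun θ v`. -/
def interpFun (θ v : ℝ) : ℝ := (Real.exp (-θ * v) + Real.exp ((1 - θ) * v))⁻¹

theorem interpFun_pos (θ v : ℝ) : 0 < interpFun θ v := by
  unfold interpFun
  positivity

theorem exp_mul_eq_interpFun_add (θ v : ℝ) :
    Real.exp (θ * v) = interpFun θ v + Real.exp v * interpFun θ v := by
  have hexp : Real.exp (θ * v) * (Real.exp (-θ * v) + Real.exp ((1 - θ) * v)) =
      1 + Real.exp v := by
    rw [mul_add, ← Real.exp_add, ← Real.exp_add]
    ring_nf
    rw [Real.exp_zero]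
  rw [← one_add_mul, interpFun, ← div_eq_mul_inv, eq_div_iff (by positivity), hexp]

theorem interpFun_le_exp (θ v : ℝ) : interpFun θ v ≤ Real.exp (θ * v) := by
  rw [exp_mul_eq_interpFun_add]
  exact le_add_of_nonneg_right (mul_pos (Real.exp_pos v) (interpFun_pos θ v)).le

theorem interpFun_le_exp_sub (θ v : ℝ) : interpFun θ v ≤ Real.exp (-(1 - θ) * v) := by
  rw [interpFun, neg_mul (1 - θ), Real.exp_neg]
  exact inv_anti₀ (Real.exp_pos _) (le_add_of_nonneg_left (Real.exp_pos _).le)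

theorem interpFun_le_one (hθ : θ ∈ Icc 0 1) (v : ℝ) : interpFun θ v ≤ 1 := by
  rcases le_total v 0 with hv | hv
  · exact (interpFun_le_exp θ v).trans
      (Real.exp_le_one_iff.2 (mul_nonpos_of_nonneg_of_nonpos hθ.1 hv))
  · exact (interpFun_le_exp_sub θ v).trans
      (Real.exp_le_one_iff.2 (mul_nonpos_of_nonpos_of_nonneg (by linarith [hθ.2]) hv))

theorem hasDerivAt_interpFun (θ v : ℝ) :
    HasDerivAt (interpFun θ)
      ((θ * Real.exp (-θ * v) - (1 - θ) * Real.exp ((1 - θ) * v)) * interpFun θ v ^ 2) v := by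
  have hexp (c : ℝ) : HasDerivAt (fun v => Real.exp (c * v)) (c * Real.exp (c * v)) v := by
    simpa [mul_comm] using ((hasDerivAt_id v).const_mul c).exp
  have hne : Real.exp (-θ * v) + Real.exp ((1 - θ) * v) ≠ 0 := by positivity
  refine (((hexp (-θ)).add (hexp (1 - θ))).inv hne).congr_deriv ?_
  rw [interpFun, inv_pow, ← div_eq_mul_inv]
  simp only [Pi.add_apply]
  ring

theorem continuous_interpFun (θ : ℝ) : Continuous (interpFun θ) :=
  continuous_iff_continuousAt.2 fun v => (hasDerivAt_interpFun θ v).continuousAt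

theorem abs_deriv_interpFun_le (hθ : θ ∈ Icc 0 1) (v : ℝ) :
    |deriv (interpFun θ) v| ≤ interpFun θ v := by
  have hpos := interpFun_pos θ v
  have hinv : (Real.exp (-θ * v) + Real.exp ((1 - θ) * v)) * interpFun θ v = 1 :=
    mul_inv_cancel₀ (by positivity)
  rw [(hasDerivAt_interpFun θ v).deriv, sq, ← mul_assoc, abs_mul, abs_of_pos hpos]
  refine mul_le_of_le_one_left hpos.le ?_
  rw [abs_mul, abs_of_pos hpos]
  refine (mul_le_mul_of_nonneg_right ?_ hpos.le).trans_eq hinv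
  have := mul_le_mul_of_nonneg_right hθ.2 (Real.exp_pos (-θ * v)).le
  have := mul_nonneg hθ.1 (Real.exp_pos (-θ * v)).le
  have := mul_nonneg hθ.1 (Real.exp_pos ((1 - θ) * v)).le
  have := mul_le_mul_of_nonneg_right hθ.2 (Real.exp_pos ((1 - θ) * v)).le
  exact abs_le.2 ⟨by linarith, by linarith⟩

theorem integrable_interpFun (hθ : θ ∈ Ioo 0 1) : Integrable (interpFun θ) := by
  have hnorm (v : ℝ) : ‖interpFun θ v‖ = interpFun θ v := Real.norm_of_nonneg (interpFun_pos θ v).le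
  have hmeas {s : Set ℝ} : AEStronglyMeasurable (interpFun θ) (volume.restrict s) :=
    (continuous_interpFun θ).aestronglyMeasurable
  rw [← integrableOn_univ, ← Iic_union_Ioi (a := (0 : ℝ)), integrableOn_union]
  exact ⟨(integrableOn_exp_mul_Iic hθ.1 0).mono' hmeas
      (.of_forall fun v => (hnorm v).trans_le (interpFun_le_exp θ v)),
    (integrableOn_exp_mul_Ioi (by linarith [hθ.2]) 0).mono' hmeas
      (.of_forall fun v => (hnorm v).trans_le (interpFun_le_exp_sub θ v))⟩

/-- The Fourier transform of `interpFun θ`. -/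
def interpWeight (θ : ℝ) : ℝ → ℂ := 𝓕 fun v => (interpFun θ v : ℂ)

theorem continuous_interpWeight (hθ : θ ∈ Ioo 0 1) : Continuous (interpWeight θ) :=
  continuous_fourier (integrable_interpFun hθ).ofReal

theorem integrable_interpWeight (hθ : θ ∈ Ioo 0 1) : Integrable (interpWeight θ) := by
  have hi := integrable_interpFun hθ
  have hθ' := Ioo_subset_Icc_self hθ
  have hderiv : deriv (fun v => (interpFun θ v : ℂ)) = fun v => ((deriv (interpFun θ) v : ℝ) : ℂ) :=
    funext fun v => (hasDerivAt_interpFun θ v).differentiableAt.hasDerivAt.ofReal_comp.deriv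
  have hnorm (v : ℝ) : ‖(interpFun θ v : ℂ)‖ ≤ 1 := by
    rw [norm_real, Real.norm_of_nonneg (interpFun_pos θ v).le]
    exact interpFun_le_one hθ' v
  have hnorm' (v : ℝ) : ‖((deriv (interpFun θ) v : ℝ) : ℂ)‖ ≤ interpFun θ v := by
    rw [norm_real]
    exact abs_deriv_interpFun_le hθ' v
  have hi' : Integrable fun v => ((deriv (interpFun θ) v : ℝ) : ℂ) :=
    hi.mono' (measurable_deriv _).complex_ofReal.aestronglyMeasurable (.of_forall hnorm')
  refine integrable_fourier_of_memLp_deriv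
    (fun v => (hasDerivAt_interpFun θ v).ofReal_comp.differentiableAt) hi.ofReal
    (memLp_two_of_integrable_of_norm_le hi.ofReal hnorm) (hderiv ▸ hi') (hderiv ▸ ?_)
  exact memLp_two_of_integrable_of_norm_le hi'
    fun v => (hnorm' v).trans (interpFun_le_one hθ' v)

theorem interpFun_eq_integral (hθ : θ ∈ Ioo 0 1) (v : ℝ) :
    (interpFun θ v : ℂ) = ∫ y, (Real.fourierChar (y * v) : ℂ) * interpWeight θ y := by
  have hinv := congrFun (Continuous.fourierInv_fourier_eq
    (continuous_ofReal.comp (continuous_interpFun θ)) (integrable_interpFun hθ).ofReal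
    (integrable_interpWeight hθ)) v
  rw [Real.fourierInv_eq] at hinv
  simpa only [Circle.smul_def, smul_eq_mul, RCLike.inner_apply, conj_trivial, mul_comm v]
    using! hinv.symm

/-- The measure over which imaginary powers are averaged. -/
def interpMeasure (θ : ℝ) : Measure ℝ := volume.withDensity fun y => ‖interpWeight θ y‖ₑ

theorem isFiniteMeasure_interpMeasure (hθ : θ ∈ Ioo 0 1) : IsFiniteMeasure (interpMeasure θ) :=
  isFiniteMeasure_withDensity (integrable_interpWeight hθ).2.ne

theorem lintegral_interpMeasure (hθ : θ ∈ Ioo 0 1) (f : ℝ → ℝ≥0∞) :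
    ∫⁻ y, f y ∂interpMeasure θ = ∫⁻ y, ‖interpWeight θ y‖ₑ * f y :=
  lintegral_withDensity_eq_lintegral_mul_non_measurable _
    (continuous_interpWeight hθ).enorm.measurable (.of_forall fun _ => enorm_lt_top) f

variable {α : Type*} [MeasurableSpace α] {ν : Measure α} {φ : α → ℝ} {h : α → ℂ}

theorem enorm_fourierChar (r : ℝ) : ‖(Real.fourierChar r : ℂ)‖ₑ = 1 := by
  rw [← ofReal_norm, Circle.norm_coe, ENNReal.ofReal_one]

theorem lintegral_interpMeasure_enorm_ne_top (hθ : θ ∈ Ioo 0 1) (hh : Integrable h ν) :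
    ∫⁻ y, ‖∫ ξ, (Real.fourierChar (y * φ ξ) : ℂ) * h ξ ∂ν‖ₑ ∂interpMeasure θ ≠ ∞ := by
  have := isFiniteMeasure_interpMeasure hθ
  refine ((lintegral_mono fun y => (enorm_integral_le_lintegral_enorm _).trans_eq ?_).trans_lt
    (lintegral_const_lt_top hh.2.ne)).ne
  simp only [enorm_mul, enorm_fourierChar, one_mul]

theorem enorm_integral_interpFun_mul_le [SFinite ν] (hθ : θ ∈ Ioo 0 1) (hφ : Measurable φ)
    (hh : Integrable h ν) (c : ℝ) :
    ‖∫ ξ, (interpFun θ (c + φ ξ) : ℂ) * h ξ ∂ν‖ₑ ≤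
      ∫⁻ y, ‖∫ ξ, (Real.fourierChar (y * φ ξ) : ℂ) * h ξ ∂ν‖ₑ ∂interpMeasure θ := by
  have hchar : Measurable fun w : α × ℝ => (Real.fourierChar (w.2 * (c + φ w.1)) : ℂ) :=
    (continuous_subtype_val.comp Real.continuous_fourierChar).measurable.comp (by fun_prop)
  have hint : Integrable (Function.uncurry fun ξ y =>
      (Real.fourierChar (y * (c + φ ξ)) : ℂ) * interpWeight θ y * h ξ) (ν.prod volume) := by
    refine (hh.mul_prod (integrable_interpWeight hθ)).mono (.mul (hchar.mul
      ((continuous_interpWeight hθ).measurable.comp measurable_snd)).aestronglyMeasurable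
        hh.aestronglyMeasurable.comp_fst) (.of_forall fun w => ?_)
    rw [Function.uncurry, norm_mul, norm_mul, norm_mul, Circle.norm_coe, one_mul, mul_comm]
  have hswap : ∫ ξ, (interpFun θ (c + φ ξ) : ℂ) * h ξ ∂ν = ∫ y,
      (Real.fourierChar (y * c) : ℂ) * (interpWeight θ y *
        ∫ ξ, (Real.fourierChar (y * φ ξ) : ℂ) * h ξ ∂ν) := by
    simp_rw [interpFun_eq_integral hθ, ← integral_mul_const, ← integral_const_mul]
    rw [integral_integral_swap hint]
    refine integral_congr_ae (.of_forall fun y => integral_congr_ae (.of_forall fun ξ => ?_))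
    simp only [mul_add, AddChar.map_add_eq_mul, Circle.coe_mul]
    ring
  rw [hswap, lintegral_interpMeasure hθ]
  refine (enorm_integral_le_lintegral_enorm _).trans_eq ?_
  simp only [enorm_mul, enorm_fourierChar, one_mul]

/-- The choice `e^c = A / B` turns the family of additive bounds into a multiplicative one;
perturbing both `A` and `B` covers the case where one of them vanishes. -/
theorem le_two_mul_rpow_mul_rpow (hθ : θ ∈ Ioo 0 1) {X A B : ℝ} (hA : 0 ≤ A) (hB : 0 ≤ B)
    (hX : ∀ c, Real.exp (θ * c) * X ≤ A + Real.exp c * B) :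
    X ≤ 2 * (A ^ (1 - θ) * B ^ θ) := by
  have hperturbed (ε : ℝ) (hε : 0 < ε) : X ≤ 2 * ((A + ε) ^ (1 - θ) * (B + ε) ^ θ) := by
    have hAε : 0 < A + ε := by linarith
    have hBε : 0 < B + ε := by linarith
    have hc := hX (Real.log ((A + ε) / (B + ε)))
    rw [Real.exp_log (by positivity), mul_comm θ, ← Real.rpow_def_of_pos (by positivity)] at hc
    have hle : ((A + ε) / (B + ε)) ^ θ * X ≤ 2 * (A + ε) := by
      have : (A + ε) / (B + ε) * B ≤ A + ε := by
        rw [div_mul_eq_mul_div, div_le_iff₀ hBε]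
        gcongr
        linarith
      linarith
    rw [← le_div_iff₀' (by positivity)] at hle
    refine hle.trans_eq ?_
    rw [Real.div_rpow hAε.le hBε.le, Real.rpow_sub hAε, Real.rpow_one]
    field_simp
  have hcont : Continuous fun ε : ℝ => 2 * ((A + ε) ^ (1 - θ) * (B + ε) ^ θ) :=
    continuous_const.mul (.mul ((continuous_const_add A).rpow_const fun _ => .inr
      (by linarith [hθ.2])) ((continuous_const_add B).rpow_const fun _ => .inr hθ.1.le))
  have hlim := (hcont.tendsto 0).mono_left (nhdsWithin_le_nhds (s := Ioi 0))
  simp only [add_zero] at hlim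
  exact ge_of_tendsto hlim (Filter.eventually_of_mem self_mem_nhdsWithin hperturbed)

theorem exp_mul_integral_eq_add (hφ : Measurable φ) (hθ : θ ∈ Icc 0 1)
    (hh : Integrable h ν) (hk : Integrable (fun ξ => (Real.exp (φ ξ) : ℂ) * h ξ) ν) (c : ℝ) :
    (Real.exp (θ * c) : ℂ) * ∫ ξ, (Real.exp (θ * φ ξ) : ℂ) * h ξ ∂ν =
      ∫ ξ, (interpFun θ (c + φ ξ) : ℂ) * h ξ ∂ν +
        Real.exp c * ∫ ξ, (interpFun θ (c + φ ξ) : ℂ) * ((Real.exp (φ ξ) : ℂ) * h ξ) ∂ν := by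
  have hint {k : α → ℂ} (hk : Integrable k ν) :
      Integrable (fun ξ => (interpFun θ (c + φ ξ) : ℂ) * k ξ) ν :=
    hk.bdd_mul (c := 1) ((continuous_interpFun θ).measurable.comp (by fun_prop :
      Measurable fun ξ => c + φ ξ)).complex_ofReal.aestronglyMeasurable (.of_forall fun ξ => by
        rw [norm_real, Real.norm_of_nonneg (interpFun_pos _ _).le]
        exact interpFun_le_one hθ _)
  rw [← integral_const_mul, ← integral_const_mul, ← integral_add (hint hh) ((hint hk).const_mul _)]
  refine integral_congr_ae (.of_forall fun ξ => ?_)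
  have hsplit := congrArg ((↑) : ℝ → ℂ) (exp_mul_eq_interpFun_add θ (c + φ ξ))
  rw [mul_add, Real.exp_add, Real.exp_add] at hsplit
  push_cast at hsplit ⊢
  linear_combination h ξ * hsplit

/-- A substitute for the three lines theorem in which the imaginary powers are averaged, so that
it can be followed by Fubini's theorem and Jensen's inequality. -/
theorem enorm_integral_exp_mul_le [SFinite ν] (hθ : θ ∈ Ioo 0 1) (hφ : Measurable φ)
    (hh : Integrable h ν) (hk : Integrable (fun ξ => (Real.exp (φ ξ) : ℂ) * h ξ) ν) :
    ‖∫ ξ, (Real.exp (θ * φ ξ) : ℂ) * h ξ ∂ν‖ₑ ≤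
      2 * ((∫⁻ y, ‖∫ ξ, (Real.fourierChar (y * φ ξ) : ℂ) * h ξ ∂ν‖ₑ ∂interpMeasure θ) ^ (1 - θ) *
        (∫⁻ y, ‖∫ ξ, (Real.fourierChar (y * φ ξ) : ℂ) * ((Real.exp (φ ξ) : ℂ) * h ξ) ∂ν‖ₑ
          ∂interpMeasure θ) ^ θ) := by
  have hA := lintegral_interpMeasure_enorm_ne_top (φ := φ) hθ hh
  have hB := lintegral_interpMeasure_enorm_ne_top (φ := φ) hθ hk
  have hbound {k : α → ℂ} (hk : Integrable k ν) (c : ℝ) :=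
    ENNReal.toReal_mono (lintegral_interpMeasure_enorm_ne_top (φ := φ) hθ hk)
      (enorm_integral_interpFun_mul_le hθ hφ hk c)
  simp only [toReal_enorm] at hbound
  set A := ∫⁻ y, ‖∫ ξ, (Real.fourierChar (y * φ ξ) : ℂ) * h ξ ∂ν‖ₑ ∂interpMeasure θ
  set B := ∫⁻ y, ‖∫ ξ, (Real.fourierChar (y * φ ξ) : ℂ) * ((Real.exp (φ ξ) : ℂ) * h ξ) ∂ν‖ₑ
    ∂interpMeasure θ
  have hreal := le_two_mul_rpow_mul_rpow hθ (X := ‖∫ ξ, (Real.exp (θ * φ ξ) : ℂ) * h ξ ∂ν‖)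
    A.toReal_nonneg B.toReal_nonneg fun c => by
    rw [← Real.norm_of_nonneg (Real.exp_pos (θ * c)).le, ← norm_real, ← norm_mul,
      exp_mul_integral_eq_add hφ (Ioo_subset_Icc_self hθ) hh hk]
    refine (norm_add_le _ _).trans (add_le_add (hbound hh c) ?_)
    rw [norm_mul, norm_real, Real.norm_of_nonneg (Real.exp_pos c).le]
    exact mul_le_mul_of_nonneg_left (hbound hk c) (Real.exp_pos c).le
  rw [← ofReal_norm]
  refine (ENNReal.ofReal_le_ofReal hreal).trans_eq ?_
  rw [ENNReal.toReal_rpow, ENNReal.toReal_rpow, ← ENNReal.toReal_mul,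
    ENNReal.ofReal_mul (by norm_num), ENNReal.ofReal_toReal, ENNReal.ofReal_ofNat]
  exact ENNReal.mul_ne_top (ENNReal.rpow_ne_top_of_nonneg (by linarith [hθ.2]) hA)
    (ENNReal.rpow_ne_top_of_nonneg hθ.1.le hB)

end Interpolation

/-! ### The mixed norm estimate -/

section Averaging

theorem lintegral_rpow_le {α : Type*} [MeasurableSpace α] (μ : Measure α) {r : ℝ} (hr : 1 ≤ r)
    {f : α → ℝ≥0∞} (hf : Measurable f) :
    (∫⁻ y, f y ∂μ) ^ r ≤ μ univ ^ (r - 1) * ∫⁻ y, f y ^ r ∂μ := by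
  have hr0 : 0 < r := by linarith
  have hJensen := eLpNorm'_le_eLpNorm'_mul_rpow_measure_univ one_pos hr
    (hf.aestronglyMeasurable (μ := μ))
  simp only [eLpNorm', enorm_eq_self, ENNReal.rpow_one, div_one] at hJensen
  refine (ENNReal.rpow_le_rpow hJensen hr0.le).trans_eq ?_
  rw [ENNReal.mul_rpow_of_nonneg _ _ hr0.le, ← ENNReal.rpow_mul, ← ENNReal.rpow_mul,
    one_div_mul_cancel hr0.ne', ENNReal.rpow_one, mul_comm]
  congr 2
  field_simp

theorem lintegral_lintegral_rpow_le {α γ : Type*} [MeasurableSpace α] [MeasurableSpace γ]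
    {ν : Measure α} {μ : Measure γ} [SFinite ν] [IsFiniteMeasure μ] {r : ℝ} (hr : 1 ≤ r)
    {f : α → γ → ℝ≥0∞} (hf : Measurable (Function.uncurry f)) {B : ℝ≥0∞}
    (hB : ∀ y, ∫⁻ x, f x y ^ r ∂ν ≤ B) :
    ∫⁻ x, (∫⁻ y, f x y ∂μ) ^ r ∂ν ≤ μ univ ^ r * B :=
  calc _ ≤ ∫⁻ x, μ univ ^ (r - 1) * ∫⁻ y, f x y ^ r ∂μ ∂ν :=
        lintegral_mono fun x => lintegral_rpow_le μ hr hf.of_uncurry_left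
    _ = μ univ ^ (r - 1) * ∫⁻ y, ∫⁻ x, f x y ^ r ∂ν ∂μ := by
        rw [lintegral_const_mul', lintegral_lintegral_swap (hf.pow_const r).aemeasurable]
        exact ENNReal.rpow_ne_top_of_nonneg (by linarith) (measure_ne_top _ _)
    _ ≤ μ univ ^ (r - 1) * ∫⁻ _, B ∂μ := by
        gcongr with y
        exact hB y
    _ = μ univ ^ r * B := by
        rw [lintegral_const, mul_comm B, ← mul_assoc]
        nth_rw 2 [← ENNReal.rpow_one (μ univ)]
        rw [← ENNReal.rpow_add_of_nonneg _ _ (by linarith) zero_le_one, sub_add_cancel]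

end Averaging

section MixedNorm

open FourierTransform

/-- The imaginary power `|D|^{2πir}` acting on frequency profiles. -/
def imagPower (r : ℝ) (h : ℝ → ℂ) (ξ : ℝ) : ℂ := (Real.fourierChar (r * Real.log |ξ|) : ℂ) * h ξ

variable {a β θ : ℝ} {h : ℝ → ℂ}

theorem enorm_imagPower (r : ℝ) (h : ℝ → ℂ) (ξ : ℝ) : ‖imagPower r h ξ‖ₑ = ‖h ξ‖ₑ := by
  rw [imagPower, enorm_mul, enorm_fourierChar, one_mul]

theorem weighted_imagPower (σ r : ℝ) (h : ℝ → ℂ) :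
    weighted σ (imagPower r h) = imagPower r (weighted σ h) :=
  funext fun _ => mul_left_comm _ _ _

theorem measurable_imagPower (r : ℝ) (hh : Measurable h) : Measurable (imagPower r h) := by
  unfold imagPower
  fun_prop

theorem measurable_uncurry_imagPower {α : Type*} [MeasurableSpace α] {r : α → ℝ}
    (hr : Measurable r) (hh : Measurable h) :
    Measurable (Function.uncurry fun w => imagPower (r w) h) := by
  have : Measurable fun z : α × ℝ => r z.1 := hr.comp measurable_fst
  unfold imagPower Function.uncurry
  fun_prop

theorem integrable_imagPower (r : ℝ) (hi : Integrable h) : Integrable (imagPower r h) := by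
  have hchar : Measurable fun ξ => (Real.fourierChar (r * Real.log |ξ|) : ℂ) := by fun_prop
  exact hi.mono_enorm (hchar.aestronglyMeasurable.mul hi.aestronglyMeasurable)
    (.of_forall fun ξ => (enorm_imagPower r h ξ).le)

theorem measurable_maxEvolution (a : ℝ) {α : Type*} [MeasurableSpace α] {g : α → ℝ → ℂ}
    (hg : Measurable (Function.uncurry g)) {t : α → ℝ} (ht : Measurable t) :
    Measurable fun w => maxEvolution a (g w) (t w) := by
  unfold maxEvolution
  exact .iSup fun k => (measurable_evolution a hg ht (x := fun _ => _) measurable_const).enorm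

theorem evolution_eq_fourier (a : ℝ) (g : ℝ → ℂ) (t x : ℝ) :
    evolution a g t x = 𝓕 (fun ξ => planeWave a t 0 ξ * g ξ) ((2 * Real.pi)⁻¹ * x) := by
  rw [Real.fourier_real_eq_integral_exp_smul]
  refine integral_congr_ae (.of_forall fun ξ => ?_)
  simp only [planeWave, smul_eq_mul, ← mul_assoc, ← exp_add]
  congr 2
  have : (Real.pi : ℂ) ≠ 0 := ofReal_ne_zero.2 Real.pi_ne_zero
  push_cast
  field_simp
  ring

theorem lintegral_enorm_evolution_sq_le (a : ℝ) (hh : Integrable h) (t : ℝ) :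
    ∫⁻ x, ‖evolution a h t x‖ₑ ^ (2 : ℝ) ≤
      ENNReal.ofReal (2 * Real.pi) * ∫⁻ ξ, ‖h ξ‖ₑ ^ (2 : ℝ) := by
  have hnorm (ξ : ℝ) : ‖planeWave a t 0 ξ * h ξ‖ₑ = ‖h ξ‖ₑ := by
    rw [← ofReal_norm, norm_planeWave_mul, ofReal_norm]
  simp_rw [evolution_eq_fourier a h t]
  rw [lintegral_comp_mul_left (by positivity)
    fun w => ‖𝓕 (fun ξ => planeWave a t 0 ξ * h ξ) w‖ₑ ^ (2 : ℝ), inv_inv,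
    abs_of_pos Real.two_pi_pos]
  refine mul_le_mul_right ((lintegral_enorm_fourier_sq_le
    (integrable_planeWave_mul a t 0 hh)).trans_eq ?_) _
  simp only [hnorm]

theorem ae_abs_rpow_eq_exp (s : ℝ) :
    ∀ᵐ ξ : ℝ, |ξ| ^ s = Real.exp (s * Real.log |ξ|) := by
  filter_upwards [Measure.ae_ne volume (0 : ℝ)] with ξ hξ
  rw [Real.rpow_def_of_pos (abs_pos.2 hξ), mul_comm]

theorem enorm_evolution_weighted_le (hθ : θ ∈ Ioo 0 1) {s : ℝ} (hh : Integrable h)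
    (hsh : Integrable (weighted s h)) (t x : ℝ) :
    ‖evolution a (weighted (θ * s) h) t x‖ₑ ≤
      2 * ((∫⁻ y, ‖evolution a (imagPower (y * s) h) t x‖ₑ ∂interpMeasure θ) ^ (1 - θ) *
        (∫⁻ y, ‖evolution a (imagPower (y * s) (weighted s h)) t x‖ₑ ∂interpMeasure θ) ^ θ) := by
  have hweight : ∀ᵐ ξ : ℝ, planeWave a t x ξ * weighted s h ξ =
      (Real.exp (s * Real.log |ξ|) : ℂ) * (planeWave a t x ξ * h ξ) := by
    filter_upwards [ae_abs_rpow_eq_exp s] with ξ hξ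
    rw [weighted, hξ, mul_left_comm]
  have hinterp := enorm_integral_exp_mul_le (ν := volume) (φ := fun ξ => s * Real.log |ξ|) hθ
    (by fun_prop) (integrable_planeWave_mul a t x hh)
    ((integrable_planeWave_mul a t x hsh).congr hweight)
  have hleft : (fun ξ => planeWave a t x ξ * weighted (θ * s) h ξ) =ᵐ[volume] fun ξ =>
      (Real.exp (θ * (s * Real.log |ξ|)) : ℂ) * (planeWave a t x ξ * h ξ) := by
    filter_upwards [ae_abs_rpow_eq_exp (θ * s)] with ξ hξ
    rw [weighted, hξ, mul_left_comm, mul_assoc θ]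
  have hright (g : ℝ → ℂ) (y : ℝ) : evolution a (imagPower (y * s) g) t x =
      ∫ ξ, (Real.fourierChar (y * (s * Real.log |ξ|)) : ℂ) * (planeWave a t x ξ * g ξ) := by
    simp only [evolution, imagPower, mul_left_comm, mul_assoc]
  rw [evolution, integral_congr_ae hleft]
  convert hinterp using 7 with y y
  · rw [hright]
  · rw [hright]
    exact integral_congr_ae (hweight.mono fun ξ hξ => by simp only [hξ])

theorem measurable_evolution_imagPower (a : ℝ) (hm : Measurable h) (s t : ℝ) :
    Measurable (Function.uncurry fun x y => ‖evolution a (imagPower (y * s) h) t x‖ₑ) :=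
  (measurable_evolution a (g := fun w : ℝ × ℝ => imagPower (w.2 * s) h)
    (measurable_uncurry_imagPower (measurable_snd.mul_const s) hm) measurable_const
    measurable_fst).enorm

theorem measurable_maxEvolution_imagPower (a : ℝ) (hm : Measurable h) (s : ℝ) :
    Measurable (Function.uncurry fun t y => maxEvolution a (imagPower (y * s) h) t) :=
  measurable_maxEvolution a (g := fun w : ℝ × ℝ => imagPower (w.2 * s) h)
    (measurable_uncurry_imagPower (measurable_snd.mul_const s) hm) measurable_fst

theorem lintegral_lintegral_evolution_sq_le (a : ℝ) (hm : Measurable h) (hh : Integrable h)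
    (s t : ℝ) (μ : Measure ℝ) [IsFiniteMeasure μ] :
    ∫⁻ x, (∫⁻ y, ‖evolution a (imagPower (y * s) h) t x‖ₑ ∂μ) ^ (2 : ℝ) ≤
      μ univ ^ (2 : ℝ) * (ENNReal.ofReal (2 * Real.pi) * ∫⁻ ξ, ‖h ξ‖ₑ ^ (2 : ℝ)) :=
  lintegral_lintegral_rpow_le one_le_two (measurable_evolution_imagPower a hm s t) fun y => by
    simpa only [enorm_imagPower] using
      lintegral_enorm_evolution_sq_le a (integrable_imagPower (y * s) hh) t

theorem lintegral_lintegral_maxEvolution_rpow_le (hβ0 : 0 ≤ β) (hβ : β ≤ a / 2)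
    (hm : Measurable h) (hi : Integrable (weighted (β / 2) h)) (s : ℝ) (μ : Measure ℝ)
    [IsFiniteMeasure μ] :
    ∫⁻ t, (∫⁻ y, maxEvolution a (imagPower (y * s) (weighted (β / 2) h)) t ∂μ) ^
        (2 * (2 + a) / (β + 1)) ≤
      μ univ ^ (2 * (2 + a) / (β + 1)) *
        (240 * ∫⁻ ξ, ‖h ξ‖ₑ ^ (2 : ℝ)) ^ ((2 + a) / (β + 1)) := by
  refine lintegral_lintegral_rpow_le ?_
    (measurable_maxEvolution_imagPower a (measurable_weighted _ hm) s) fun y => ?_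
  · rw [le_div_iff₀ (by linarith)]
    linarith
  · have hy := integrable_imagPower (y * s) hi
    rw [← weighted_imagPower] at hy ⊢
    simpa only [enorm_imagPower] using
      lintegral_maxEvolution_rpow_le hβ0 hβ (measurable_imagPower (y * s) hm) hy

/-- In the pointwise interpolation inequality the unweighted factor is integrated in `x` by
Plancherel, the weighted one is replaced by its supremum in `x`. -/
theorem lintegral_enorm_evolution_weighted_le (hθ : θ ∈ Ioo 0 1) {s : ℝ} (hm : Measurable h)
    (hh : Integrable h) (hsh : Integrable (weighted s h)) (t : ℝ) :
    (∫⁻ x, ‖evolution a (weighted (θ * s) h) t x‖ₑ ^ (2 / (1 - θ))) ^ (1 / (2 / (1 - θ))) ≤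
      (interpMeasure θ univ ^ (2 : ℝ) *
        (ENNReal.ofReal (2 * Real.pi) * ∫⁻ ξ, ‖h ξ‖ₑ ^ (2 : ℝ))) ^ (1 / (2 / (1 - θ))) *
      (2 * (∫⁻ y, maxEvolution a (imagPower (y * s) (weighted s h)) t ∂interpMeasure θ) ^ θ) := by
  have := isFiniteMeasure_interpMeasure hθ
  have hθ' : 0 < 1 - θ := sub_pos.2 hθ.2
  set p := 2 / (1 - θ) with hp
  have hp0 : 0 < p := by positivity
  set A := fun x => ∫⁻ y, ‖evolution a (imagPower (y * s) h) t x‖ₑ ∂interpMeasure θ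
  have hA : Measurable A := (measurable_evolution_imagPower a hm s t).lintegral_prod_right'
  set M := ∫⁻ y, maxEvolution a (imagPower (y * s) (weighted s h)) t ∂interpMeasure θ
  have hpoint (x : ℝ) : ‖evolution a (weighted (θ * s) h) t x‖ₑ ^ p ≤
      A x ^ (2 : ℝ) * (2 * M ^ θ) ^ p := by
    calc _ ≤ (A x ^ (1 - θ) * (2 * M ^ θ)) ^ p := by
          rw [mul_left_comm]
          refine ENNReal.rpow_le_rpow ((enorm_evolution_weighted_le hθ hh hsh t x).trans ?_) hp0.le
          gcongr
          exacts [hθ.1.le, lintegral_mono fun y =>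
            enorm_evolution_le_maxEvolution a (integrable_imagPower (y * s) hsh) t x]
      _ = _ := by
          rw [ENNReal.mul_rpow_of_nonneg _ _ hp0.le, ← ENNReal.rpow_mul,
            show (1 - θ) * p = 2 by rw [hp]; field_simp]
  rw [one_div, ENNReal.rpow_inv_le_iff hp0, ENNReal.mul_rpow_of_nonneg _ _ hp0.le,
    ← ENNReal.rpow_mul, inv_mul_cancel₀ hp0.ne', ENNReal.rpow_one]
  calc _ ≤ _ := lintegral_mono hpoint
    _ = _ := lintegral_mul_const _ (hA.pow_const 2)
    _ ≤ _ := by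
        gcongr
        exact lintegral_lintegral_evolution_sq_le a hm hh s t _

theorem exists_lintegral_evolution_weighted_le (hβ0 : 0 ≤ β) (hβ : β ≤ a / 2)
    (hθ : θ ∈ Ioo 0 1) : ∃ C : ℝ≥0∞, C ≠ ∞ ∧ ∀ h : ℝ → ℂ, Measurable h → Integrable h →
      Integrable (weighted (β / 2) h) →
      ∫⁻ t, ((∫⁻ x, ‖evolution a (weighted (θ * (β / 2)) h) t x‖ₑ ^ (2 / (1 - θ))) ^
          (1 / (2 / (1 - θ)))) ^ (2 * (2 + a) / (θ * (β + 1))) ≤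
        C * (∫⁻ ξ, ‖h ξ‖ₑ ^ (2 : ℝ)) ^ (2 * (2 + a) / (θ * (β + 1)) / 2) := by
  have := isFiniteMeasure_interpMeasure hθ
  obtain ⟨hθ0, hθ1⟩ := id hθ
  have : 0 < 1 - θ := sub_pos.2 hθ1
  have : 0 < β + 1 := by linarith
  have : 0 < 2 + a := by linarith
  set p' := 1 / (2 / (1 - θ)) with hp
  set r := 2 * (2 + a) / (β + 1) with hr
  set q := 2 * (2 + a) / (θ * (β + 1)) with hq
  have hp0 : 0 ≤ p' := by positivity
  have hq0 : 0 ≤ q := by positivity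
  have hr0 : 0 ≤ r / 2 := by positivity
  have hr2 : (2 + a) / (β + 1) = r / 2 := by rw [hr]; ring
  have hθq : θ * q = r := by rw [hq, hr]; field_simp
  have hexp : p' * q + r / 2 = q / 2 := by rw [← hθq, hp]; field_simp; ring
  set K := interpMeasure θ univ
  refine ⟨((K ^ (2 : ℝ) * ENNReal.ofReal (2 * Real.pi)) ^ p' * 2) ^ q * (K ^ r * 240 ^ (r / 2)),
    by finiteness, fun h hm hh hi => ?_⟩
  set E := ∫⁻ ξ, ‖h ξ‖ₑ ^ (2 : ℝ)
  set M := fun t => ∫⁻ y, maxEvolution a (imagPower (y * (β / 2)) (weighted (β / 2) h)) t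
    ∂interpMeasure θ
  have hM : Measurable M := (measurable_maxEvolution_imagPower a
    (measurable_weighted _ hm) (β / 2)).lintegral_prod_right'
  have hsplit (t : ℝ) : ((K ^ (2 : ℝ) * (ENNReal.ofReal (2 * Real.pi) * E)) ^ p' *
      (2 * M t ^ θ)) ^ q = ((K ^ (2 : ℝ) * ENNReal.ofReal (2 * Real.pi)) ^ p' * 2) ^ q *
        E ^ (p' * q) * M t ^ r := by
    simp only [← mul_assoc, ENNReal.mul_rpow_of_nonneg _ _ hq0, ENNReal.mul_rpow_of_nonneg _ _ hp0,
      ← ENNReal.rpow_mul, hθq]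
    ring
  calc _ ≤ _ := lintegral_mono fun t => ENNReal.rpow_le_rpow
        (lintegral_enorm_evolution_weighted_le hθ hm hh hi t) hq0
    _ = _ := (lintegral_congr hsplit).trans (lintegral_const_mul _ (hM.pow_const r))
    _ ≤ _ := mul_le_mul_right
        (lintegral_lintegral_maxEvolution_rpow_le hβ0 hβ hm hi (β / 2) (interpMeasure θ)) _
    _ = _ := by
        rw [hr2, ENNReal.mul_rpow_of_nonneg _ E hr0, ← hexp,
          ENNReal.rpow_add_of_nonneg _ _ (by positivity) hr0]
        ring

end MixedNorm

/-! ### The norms `Lpnorm` -/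

section Lpnorm

variable {α E : Type*} [MeasureSpace α] [NormedAddCommGroup E] {p : ℝ}

theorem Lpnorm_nonneg (p : ℝ) (f : α → E) : 0 ≤ Lpnorm p f :=
  Real.rpow_nonneg (integral_nonneg fun _ => by positivity) _

theorem Lpnorm_of_nonneg {f : α → ℝ} (hf : ∀ x, 0 ≤ f x) :
    Lpnorm p f = (∫ x, f x ^ p) ^ (1 / p) := by
  simp only [Lpnorm, Real.norm_of_nonneg (hf _)]

theorem enorm_Lpnorm (hp : 0 ≤ p) (f : α → E) :
    ‖Lpnorm p f‖ₑ = ‖∫ x, ‖f x‖ ^ p‖ₑ ^ (1 / p) :=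
  Real.enorm_rpow_of_nonneg (integral_nonneg fun _ => by positivity) (by positivity)

theorem enorm_norm_rpow (hp : 0 ≤ p) (z : E) : ‖‖z‖ ^ p‖ₑ = ‖z‖ₑ ^ p := by
  rw [Real.enorm_rpow_of_nonneg (norm_nonneg z) hp, enorm_norm]

/-- The Bochner integral of a non-integrable function is `0`, so the bound holds for every `f`. -/
theorem enorm_Lpnorm_le (hp : 0 ≤ p) (f : α → E) :
    ‖Lpnorm p f‖ₑ ≤ (∫⁻ x, ‖f x‖ₑ ^ p) ^ (1 / p) := by
  rw [enorm_Lpnorm hp]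
  gcongr
  refine (enorm_integral_le_lintegral_enorm _).trans_eq ?_
  simp only [enorm_norm_rpow hp]

theorem enorm_Lpnorm_two {f : α → E} (hf : MemLp f 2) :
    ‖Lpnorm 2 f‖ₑ = (∫⁻ x, ‖f x‖ₑ ^ (2 : ℝ)) ^ (1 / 2 : ℝ) := by
  have hint : Integrable fun x => ‖f x‖ ^ (2 : ℝ) := by
    simp_rw [Real.rpow_two]
    exact hf.integrable_norm_pow two_ne_zero
  rw [enorm_Lpnorm zero_le_two, Real.enorm_of_nonneg (integral_nonneg fun _ => by positivity),
    ofReal_integral_eq_lintegral_ofReal hint (.of_forall fun _ => by positivity)]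
  simp only [← enorm_norm_rpow zero_le_two,
    Real.enorm_of_nonneg (Real.rpow_nonneg (norm_nonneg _) _)]

end Lpnorm

/-! ### Schwartz data -/

section Schwartz

open FourierTransform SchwartzMap

variable {a β σ θ : ℝ}

theorem FT1_eq_fourier (f : ℝ → ℂ) (ξ : ℝ) : FT1 f ξ = 𝓕 f (-(2 * Real.pi)⁻¹ * ξ) := by
  rw [Real.fourier_real_eq_integral_exp_smul]
  refine integral_congr_ae (.of_forall fun x => ?_)
  simp only [smul_eq_mul]
  congr 2
  have : (Real.pi : ℂ) ≠ 0 := ofReal_ne_zero.2 Real.pi_ne_zero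
  push_cast
  field_simp

theorem lintegral_enorm_FT1_sq_le {f : ℝ → ℂ} (hf : Integrable f) :
    ∫⁻ ξ, ‖FT1 f ξ‖ₑ ^ (2 : ℝ) ≤ ENNReal.ofReal (2 * Real.pi) * ∫⁻ x, ‖f x‖ₑ ^ (2 : ℝ) := by
  simp_rw [FT1_eq_fourier]
  rw [lintegral_comp_mul_left (neg_ne_zero.2 (inv_ne_zero Real.two_pi_pos.ne'))
    fun ξ => ‖𝓕 f ξ‖ₑ ^ (2 : ℝ), inv_neg, inv_inv, abs_neg, abs_of_pos Real.two_pi_pos]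
  exact mul_le_mul_right (lintegral_enorm_fourier_sq_le hf) _

theorem exists_schwartzMap_eq_FT1 (u : 𝓢(ℝ, ℂ)) : ∃ v : 𝓢(ℝ, ℂ), ⇑v = FT1 u := by
  have hc : -(2 * Real.pi)⁻¹ ≠ 0 := neg_ne_zero.2 (inv_ne_zero Real.two_pi_pos.ne')
  refine ⟨compCLMOfContinuousLinearEquiv ℂ
    (ContinuousLinearEquiv.smulLeft (R₁ := ℝ) (Units.mk0 _ hc)) (𝓕 u), funext fun ξ => ?_⟩
  rw [FT1_eq_fourier, ← fourier_coe]
  rfl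

theorem FT1_fourier_comp_mul_left {m : ℝ → ℂ} (hm : Continuous m) (hm₁ : Integrable m)
    (hFm : Integrable (𝓕 m)) (ξ : ℝ) :
    FT1 (fun y => 𝓕 m ((2 * Real.pi)⁻¹ * y)) ξ = ((2 * Real.pi : ℝ) : ℂ) * m ξ := by
  have hinv : m ξ = ∫ w, exp (I * ((2 * Real.pi * w * ξ : ℝ) : ℂ)) * 𝓕 m w := by
    rw [← congrFun (hm.fourierInv_fourier_eq hm₁ hFm) ξ, Real.fourierInv_eq']
    refine integral_congr_ae (.of_forall fun w => ?_)
    simp only [smul_eq_mul, RCLike.inner_apply, conj_trivial, mul_comm I]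
    ring_nf
  have hscale : FT1 (fun y => 𝓕 m ((2 * Real.pi)⁻¹ * y)) ξ =
      ∫ y, exp (I * ((2 * Real.pi * ((2 * Real.pi)⁻¹ * y) * ξ : ℝ) : ℂ)) *
        𝓕 m ((2 * Real.pi)⁻¹ * y) := by
    refine integral_congr_ae (.of_forall fun y => ?_)
    simp only [mul_inv_cancel_left₀ Real.two_pi_pos.ne']
  rw [hinv, hscale, Measure.integral_comp_mul_left
    (fun w => exp (I * ((2 * Real.pi * w * ξ : ℝ) : ℂ)) * 𝓕 m w), inv_inv,
    abs_of_pos Real.two_pi_pos, real_smul]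

theorem rpow_le_one_add_pow_ceil {x : ℝ} (hx : 0 ≤ x) (hσ : 0 ≤ σ) : x ^ σ ≤ 1 + x ^ ⌈σ⌉₊ := by
  rcases le_total x 1 with hx1 | hx1
  · exact (Real.rpow_le_one hx hx1 hσ).trans (le_add_of_nonneg_right (by positivity))
  · refine le_add_of_nonneg_of_le zero_le_one ?_
    rw [← Real.rpow_natCast]
    exact Real.rpow_le_rpow_of_exponent_le hx1 (Nat.le_ceil σ)

theorem norm_weighted_le (hσ : 0 ≤ σ) (g : ℝ → ℂ) (ξ : ℝ) :
    ‖weighted σ g ξ‖ ≤ ‖g ξ‖ + ‖ξ‖ ^ ⌈σ⌉₊ * ‖g ξ‖ := by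
  rw [weighted, norm_mul, norm_real, Real.norm_of_nonneg (by positivity), ← one_add_mul,
    Real.norm_eq_abs]
  gcongr
  exact rpow_le_one_add_pow_ceil (abs_nonneg ξ) hσ

theorem integrable_weighted (hσ : 0 ≤ σ) (v : 𝓢(ℝ, ℂ)) : Integrable (weighted σ v) :=
  (v.integrable.norm.add (v.integrable_pow_mul volume ⌈σ⌉₊)).mono'
    (measurable_weighted σ v.continuous.measurable).aestronglyMeasurable
    (.of_forall (norm_weighted_le hσ v))

theorem memLp_two_weighted (hσ : 0 ≤ σ) (v : 𝓢(ℝ, ℂ)) : MemLp (weighted σ v) 2 := by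
  obtain ⟨A, -, hA⟩ := v.decay 0 0
  obtain ⟨B, -, hB⟩ := v.decay ⌈σ⌉₊ 0
  simp only [norm_iteratedFDeriv_zero, pow_zero, one_mul] at hA hB
  exact memLp_two_of_integrable_of_norm_le (integrable_weighted hσ v) fun ξ =>
    (norm_weighted_le hσ v ξ).trans (add_le_add (hA ξ) (hB ξ))

theorem hasDerivAt_disp (ha : 0 ≤ a) (ξ : ℝ) :
    HasDerivAt (disp a) ((2 + a) * |ξ| ^ (1 + a)) ξ := by
  have hderiv : Continuous fun ξ : ℝ => (2 + a) * |ξ| ^ (1 + a) :=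
    continuous_const.mul ((Real.continuous_rpow_const (by linarith)).comp continuous_abs)
  refine hasDerivAt_of_hasDerivAt_of_ne' (x := 0) (fun y hy => ?_)
    (continuous_disp ha).continuousAt hderiv.continuousAt ξ
  have hy0 : 0 < |y| := abs_pos.2 hy
  refine ((hasDerivAt_id' y).fun_mul
    ((hasDerivAt_abs hy).rpow_const (p := 1 + a) (.inl hy0.ne'))).congr_deriv ?_
  rw [one_mul, ← mul_assoc, ← mul_assoc, self_mul_sign, Real.rpow_sub_one hy0.ne']
  field_simp
  ring

theorem hasDerivAt_planeWave (ha : 0 ≤ a) (t x ξ : ℝ) :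
    HasDerivAt (planeWave a t x)
      (planeWave a t x ξ * (I * ((t * ((2 + a) * |ξ| ^ (1 + a)) - x : ℝ) : ℂ))) ξ := by
  have hphase : HasDerivAt (fun ξ => t * disp a ξ - x * ξ)
      (t * ((2 + a) * |ξ| ^ (1 + a)) - x) ξ := by
    simpa only [mul_one] using
      ((hasDerivAt_disp ha ξ).const_mul t).fun_sub ((hasDerivAt_id' ξ).const_mul x)
  exact (hphase.ofReal_comp.const_mul I).cexp

theorem memLp_planeWave_mul (a t x : ℝ) {g : ℝ → ℂ} (hg : Integrable g) (hg₂ : MemLp g 2) :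
    MemLp (fun ξ => planeWave a t x ξ * g ξ) 2 :=
  hg₂.of_le (aestronglyMeasurable_planeWave_mul a t x hg)
    (.of_forall fun ξ => (norm_planeWave_mul a t x ξ (g ξ)).le)

theorem hasDerivAt_planeWave_mul (ha : 0 ≤ a) (t : ℝ) (v : 𝓢(ℝ, ℂ)) (ξ : ℝ) :
    HasDerivAt (fun ξ => planeWave a t 0 ξ * v ξ)
      (planeWave a t 0 ξ * (I * (t * (2 + a)) * weighted (1 + a) v ξ + derivCLM ℂ ℂ v ξ)) ξ := by
  refine ((hasDerivAt_planeWave ha t 0 ξ).fun_mul (v.hasDerivAt ξ)).congr_deriv ?_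
  simp only [weighted, derivCLM_apply]
  push_cast
  ring

theorem integrable_fourier_planeWave_mul (ha : 0 ≤ a) (t : ℝ) (v : 𝓢(ℝ, ℂ)) :
    Integrable (𝓕 fun ξ => planeWave a t 0 ξ * v ξ) := by
  have hderiv : deriv (fun ξ => planeWave a t 0 ξ * v ξ) = fun ξ => planeWave a t 0 ξ *
      (I * (t * (2 + a)) * weighted (1 + a) v ξ + derivCLM ℂ ℂ v ξ) :=
    funext fun ξ => (hasDerivAt_planeWave_mul ha t v ξ).deriv
  have ha1 : 0 ≤ 1 + a := by linarith
  have hint : Integrable fun ξ =>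
      I * (t * (2 + a)) * weighted (1 + a) v ξ + derivCLM ℂ ℂ v ξ :=
    ((integrable_weighted ha1 v).const_mul _).add (derivCLM ℂ ℂ v).integrable
  have hmem : MemLp (fun ξ =>
      I * (t * (2 + a)) * weighted (1 + a) v ξ + derivCLM ℂ ℂ v ξ) 2 :=
    ((memLp_two_weighted ha1 v).const_mul _).add ((derivCLM ℂ ℂ v).memLp 2)
  refine integrable_fourier_of_memLp_deriv
    (fun ξ => (hasDerivAt_planeWave_mul ha t v ξ).differentiableAt)
    (integrable_planeWave_mul a t 0 v.integrable)
    (memLp_planeWave_mul a t 0 v.integrable (v.memLp 2)) ?_ ?_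
  · rw [hderiv]
    exact integrable_planeWave_mul a t 0 hint
  · rw [hderiv]
    exact memLp_planeWave_mul a t 0 hint hmem

theorem Wgrp_eq_evolution (a : ℝ) (f : ℝ → ℂ) (t x : ℝ) :
    Wgrp a f t x = ((1 / (2 * Real.pi) : ℝ) : ℂ) * evolution a (FT1 f) t x := by
  unfold Wgrp evolution planeWave
  congr 2 with ξ
  rw [← mul_assoc, ← exp_add]
  congr 2
  push_cast
  ring

/-- The dispersion relation is `C¹`, so the evolved profile and its derivative are in `L¹ ∩ L²`
and `W(t)u` is integrable; this is what makes the Fourier integral defining `FT1` of it honest. -/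
theorem FT1_Wgrp (ha : 0 ≤ a) (u : 𝓢(ℝ, ℂ)) (t ξ : ℝ) :
    FT1 (Wgrp a u t) ξ = planeWave a t 0 ξ * FT1 u ξ := by
  obtain ⟨v, hv⟩ := exists_schwartzMap_eq_FT1 u
  have hW : Wgrp a u t = fun y => ((1 / (2 * Real.pi) : ℝ) : ℂ) *
      𝓕 (fun ξ => planeWave a t 0 ξ * v ξ) ((2 * Real.pi)⁻¹ * y) :=
    funext fun y => by rw [Wgrp_eq_evolution, evolution_eq_fourier, hv]
  have hcont : Continuous fun ξ => planeWave a t 0 ξ * v ξ :=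
    continuous_iff_continuousAt.2 fun ξ => (hasDerivAt_planeWave_mul ha t v ξ).continuousAt
  have hinv := FT1_fourier_comp_mul_left hcont (integrable_planeWave_mul a t 0 v.integrable)
    (integrable_fourier_planeWave_mul ha t v) ξ
  rw [FT1] at hinv ⊢
  simp_rw [hW, mul_left_comm (exp _)]
  rw [integral_const_mul, hinv, ← mul_assoc, ← ofReal_mul,
    one_div_mul_cancel Real.two_pi_pos.ne', ofReal_one, one_mul, hv]

theorem Dop_Wgrp (ha : 0 ≤ a) (σ : ℝ) (u : 𝓢(ℝ, ℂ)) (t x : ℝ) :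
    Dop σ (Wgrp a u t) x =
      ((1 / (2 * Real.pi) : ℝ) : ℂ) * evolution a (weighted σ (FT1 u)) t x := by
  unfold Dop
  simp_rw [FT1_Wgrp ha]
  unfold evolution weighted planeWave
  congr 2 with ξ
  rw [mul_left_comm, ← mul_assoc (exp _), ← exp_add, mul_left_comm]
  congr 3
  push_cast
  ring

theorem enorm_Dop_Wgrp_le (ha : 0 ≤ a) (σ : ℝ) (u : 𝓢(ℝ, ℂ)) (t x : ℝ) :
    ‖Dop σ (Wgrp a u t) x‖ₑ ≤ ‖evolution a (weighted σ (FT1 u)) t x‖ₑ := by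
  rw [Dop_Wgrp ha, enorm_mul]
  refine mul_le_of_le_one_left' ?_
  rw [← ofReal_norm, norm_real, Real.norm_of_nonneg (by positivity), ENNReal.ofReal_le_one,
    div_le_one Real.two_pi_pos]
  linarith [Real.pi_gt_three]

theorem exists_lintegral_Dop_Wgrp_le (hθ : θ ∈ Ioo 0 1) (hβ0 : 0 ≤ β) (hβ : β ≤ a / 2) :
    ∃ C : ℝ≥0∞, C ≠ ∞ ∧ ∀ u : 𝓢(ℝ, ℂ),
      (∫⁻ t, ((∫⁻ x, ‖Dop (θ * (β / 2)) (Wgrp a u t) x‖ₑ ^ (2 / (1 - θ))) ^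
        (1 / (2 / (1 - θ)))) ^ (2 * (2 + a) / (θ * (β + 1)))) ^
          (1 / (2 * (2 + a) / (θ * (β + 1)))) ≤
        C * (∫⁻ x, ‖u x‖ₑ ^ (2 : ℝ)) ^ (1 / 2 : ℝ) := by
  obtain ⟨hθ0, hθ1⟩ := id hθ
  have ha : 0 ≤ a := by linarith
  have hp : 0 < 2 / (1 - θ) := div_pos two_pos (by linarith)
  have hq : 0 < 2 * (2 + a) / (θ * (β + 1)) := by positivity
  obtain ⟨C, hC, hle⟩ := exists_lintegral_evolution_weighted_le hβ0 hβ hθ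
  set p := 2 / (1 - θ)
  set q := 2 * (2 + a) / (θ * (β + 1))
  refine ⟨C ^ (1 / q) * ENNReal.ofReal (2 * Real.pi) ^ (1 / 2 : ℝ), by finiteness, fun u => ?_⟩
  obtain ⟨v, hv⟩ := exists_schwartzMap_eq_FT1 u
  have hβ2 : 0 ≤ β / 2 := by positivity
  calc _ ≤ (∫⁻ t, ((∫⁻ x, ‖evolution a (weighted (θ * (β / 2)) v) t x‖ₑ ^ p) ^
        (1 / p)) ^ q) ^ (1 / q) := by
        gcongr
        rw [hv]
        exact enorm_Dop_Wgrp_le ha _ u _ _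
    _ ≤ (C * (∫⁻ ξ, ‖v ξ‖ₑ ^ (2 : ℝ)) ^ (q / 2)) ^ (1 / q) := by
        gcongr
        exact hle v v.continuous.measurable v.integrable (integrable_weighted hβ2 v)
    _ = C ^ (1 / q) * (∫⁻ ξ, ‖FT1 u ξ‖ₑ ^ (2 : ℝ)) ^ (1 / 2 : ℝ) := by
        rw [ENNReal.mul_rpow_of_nonneg _ _ (by positivity), ← ENNReal.rpow_mul, hv]
        congr 2
        field_simp
    _ ≤ C ^ (1 / q) * (ENNReal.ofReal (2 * Real.pi) * ∫⁻ x, ‖u x‖ₑ ^ (2 : ℝ)) ^ (1 / 2 : ℝ) := by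
        gcongr
        exact lintegral_enorm_FT1_sq_le u.integrable
    _ = _ := by rw [ENNReal.mul_rpow_of_nonneg _ _ (by positivity), mul_assoc]

theorem le_toReal_mul_of_enorm_le {C : ℝ≥0∞} (hC : C ≠ ∞) {x y : ℝ} (hy : 0 ≤ y)
    (h : ‖x‖ₑ ≤ C * ‖y‖ₑ) : x ≤ C.toReal * y := by
  rw [Real.enorm_of_nonneg hy, ← ENNReal.ofReal_toReal hC,
    ← ENNReal.ofReal_mul ENNReal.toReal_nonneg] at h
  refine (le_abs_self x).trans ((ENNReal.ofReal_le_ofReal_iff (by positivity)).1 ?_)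
  rwa [← Real.enorm_eq_ofReal_abs]

theorem exists_Lpnorm_Dop_Wgrp_le (hθ : θ ∈ Ioo 0 1) (hβ0 : 0 ≤ β) (hβ : β ≤ a / 2) :
    ∃ C > 0, ∀ u : 𝓢(ℝ, ℂ),
      Lpnorm (2 * (2 + a) / (θ * (β + 1)))
          (fun t => Lpnorm (2 / (1 - θ)) (Dop (θ * (β / 2)) (Wgrp a u t))) ≤
        C * Lpnorm 2 u := by
  obtain ⟨C, hC, hle⟩ := exists_lintegral_Dop_Wgrp_le hθ hβ0 hβ
  obtain ⟨hθ0, hθ1⟩ := hθ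
  have ha : 0 ≤ a := by linarith
  have hp : 0 ≤ 2 / (1 - θ) := div_nonneg two_pos.le (by linarith)
  have hq : 0 ≤ 2 * (2 + a) / (θ * (β + 1)) := by positivity
  set p := 2 / (1 - θ)
  set q := 2 * (2 + a) / (θ * (β + 1))
  refine ⟨C.toReal + 1, by positivity, fun u => ?_⟩
  have hmixed := calc
    ‖Lpnorm q fun t => Lpnorm p (Dop (θ * (β / 2)) (Wgrp a u t))‖ₑ
    _ ≤ (∫⁻ t, ‖Lpnorm p (Dop (θ * (β / 2)) (Wgrp a u t))‖ₑ ^ q) ^ (1 / q) :=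
        enorm_Lpnorm_le hq _
    _ ≤ (∫⁻ t, ((∫⁻ x, ‖Dop (θ * (β / 2)) (Wgrp a u t) x‖ₑ ^ p) ^ (1 / p)) ^ q) ^ (1 / q) := by
        gcongr
        exact enorm_Lpnorm_le hp _
    _ ≤ C * ‖Lpnorm 2 u‖ₑ := (enorm_Lpnorm_two (u.memLp 2)).symm ▸ hle u
  have hu := Lpnorm_nonneg 2 u
  calc _ ≤ C.toReal * Lpnorm 2 u := le_toReal_mul_of_enorm_le hC hu hmixed
    _ ≤ (C.toReal + 1) * Lpnorm 2 u := by gcongr; linarith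

end Schwartz

theorem statement1_general (a θ : ℝ) (hθ : θ ∈ Ioo (0 : ℝ) 1) (β : ℝ)
    (hβ : β ∈ Icc (0 : ℝ) (a / 2)) :
    ∃ C > 0, ∀ u₀ : SchwartzMap ℝ ℂ,
      (∫ t : ℝ,
          Lpnorm (2 / (1 - θ))
              (fun x : ℝ => Dop (θ * β / 2) (fun y => Wgrp a (fun z => u₀ z) t y) x) ^
            (2 * (2 + a) / (θ * (β + 1)))) ^ (1 / (2 * (2 + a) / (θ * (β + 1)))) ≤
        C * Lpnorm 2 (fun x : ℝ => u₀ x) := by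
  obtain ⟨C, hC, hle⟩ := exists_Lpnorm_Dop_Wgrp_le hθ hβ.1 hβ.2
  refine ⟨C, hC, fun u => ?_⟩
  rw [mul_div_assoc θ, ← Lpnorm_of_nonneg fun t => Lpnorm_nonneg _ _]
  exact hle u

theorem statement1 (a : ℝ) (ha : a ∈ Set.Icc (0 : ℝ) 1)
    (θ : ℝ) (hθ : θ ∈ Set.Ioo (0 : ℝ) 1) (β : ℝ) (hβ : β ∈ Set.Icc (0 : ℝ) (a / 2)) :
    ∃ C > 0, ∀ u₀ : SchwartzMap ℝ ℂ,
      (∫ t : ℝ,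
          Lpnorm (2 / (1 - θ))
              (fun x : ℝ => Dop (θ * β / 2) (fun y => Wgrp a (fun z => u₀ z) t y) x) ^
            (2 * (2 + a) / (θ * (β + 1)))) ^ (1 / (2 * (2 + a) / (θ * (β + 1)))) ≤
        C * Lpnorm 2 (fun x : ℝ => u₀ x) :=
  statement1_general a θ hθ β hβ
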